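/- Let σ > 0 and N ≥ 2 an integer, assume Π⁺ is continuously differentiable on (m, M) and that the limits Ψ⁺ₓ(M) = lim_{x→M⁻} (d/dx)Ψ⁺(x) and Ψ⁻ₓ(m) = lim_{x→m⁺} (d/dx)Ψ⁻(x) exist. Let F : ℝ → (m, M) be a solution of equation (E) and define the implementation shortfall IS(x) = N·∫₀¹ F(x·y)·y^{N−1} dy. Then lim_{x→∞} (M − IS(x))/(M − F(x)) = N/(N + ρ⁺) and lim_{x→−∞} (IS(x) − m)/(F(x) − m) = N/(N + ρ⁻), where ρ⁺ = (Ψ⁺ₓ(M) − 1)/(1 − Ψ⁺ₓ(M)/N) and ρ⁻ = (Ψ⁻ₓ(m) − 1)/(1 − Ψ⁻ₓ(m)/N). -/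

import Mathlib

open MeasureTheory Filter Set

/-- Centered Gaussian density with variance `σ²`. -/
noncomputable def gq (σ z : ℝ) : ℝ :=
  Real.exp (-(z ^ 2) / (2 * σ ^ 2)) / (σ * Real.sqrt (2 * Real.pi))

/-- The averaged kernel `q̄(σ,x,z)`. -/
noncomputable def gqbar (σ x z : ℝ) : ℝ :=
  if x = 0 then gq σ z else (1 / x) * ∫ y in (0:ℝ)..x, gq σ (y - z)

/-- `Φ⁺(y) = E[V·1_{V>y}]`. -/
noncomputable def Phip {Ω : Type*} [MeasurableSpace Ω] (P : Measure Ω) (V : Ω → ℝ) (y : ℝ) : ℝ :=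
  ∫ ω in {ω | V ω > y}, V ω ∂P

/-- `Π⁺(y) = P(V > y)`. -/
noncomputable def Pip {Ω : Type*} [MeasurableSpace Ω] (P : Measure Ω) (V : Ω → ℝ) (y : ℝ) : ℝ :=
  (P {ω | V ω > y}).toReal

/-- `Φ⁻(y) = E[V·1_{V≤y}]`. -/
noncomputable def Phim {Ω : Type*} [MeasurableSpace Ω] (P : Measure Ω) (V : Ω → ℝ) (y : ℝ) : ℝ :=
  ∫ ω in {ω | V ω ≤ y}, V ω ∂P

/-- `Π⁻(y) = P(V ≤ y)`. -/
noncomputable def Pim {Ω : Type*} [MeasurableSpace Ω] (P : Measure Ω) (V : Ω → ℝ) (y : ℝ) : ℝ :=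
  (P {ω | V ω ≤ y}).toReal

/-- `Ψ⁺ = Φ⁺/Π⁺`. -/
noncomputable def Psip {Ω : Type*} [MeasurableSpace Ω] (P : Measure Ω) (V : Ω → ℝ) (y : ℝ) : ℝ :=
  Phip P V y / Pip P V y

/-- `Ψ⁻ = Φ⁻/Π⁻`. -/
noncomputable def Psim {Ω : Type*} [MeasurableSpace Ω] (P : Measure Ω) (V : Ω → ℝ) (y : ℝ) : ℝ :=
  Phim P V y / Pim P V y

/-- `φ⁺_g`. -/
noncomputable def phip {Ω : Type*} [MeasurableSpace Ω] (P : Measure Ω) (V : Ω → ℝ)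
    (σ : ℝ) (g : ℝ → ℝ) (x : ℝ) : ℝ :=
  (∫ z, Phip P V (g z) * gq σ (x - z)) / (∫ z, Pip P V (g z) * gq σ (x - z))

/-- `φ⁻_g`. -/
noncomputable def phim {Ω : Type*} [MeasurableSpace Ω] (P : Measure Ω) (V : Ω → ℝ)
    (σ : ℝ) (g : ℝ → ℝ) (x : ℝ) : ℝ :=
  (∫ z, Phim P V (g z) * gq σ (x - z)) / (∫ z, Pim P V (g z) * gq σ (x - z))

/-- `φ_g`, equal to `φ⁺_g` on `[0,∞)` and `φ⁻_g` on `(−∞,0)`. -/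
noncomputable def phig {Ω : Type*} [MeasurableSpace Ω] (P : Measure Ω) (V : Ω → ℝ)
    (σ : ℝ) (g : ℝ → ℝ) (x : ℝ) : ℝ :=
  if 0 ≤ x then phip P V σ g x else phim P V σ g x

/-- The interior of the support of the law of `V` is `(m, M)` (with `V` bounded). -/
def SuppIoo {Ω : Type*} [MeasurableSpace Ω] (P : Measure Ω) (V : Ω → ℝ) (m M : ℝ) : Prop :=
  m < M ∧ (∀ᵐ ω ∂P, V ω ∈ Set.Icc m M) ∧
    (∀ y < M, 0 < P {ω | V ω > y}) ∧ (∀ y, m < y → 0 < P {ω | V ω ≤ y})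

/-- Equation (E). -/
def SolvesE {Ω : Type*} [MeasurableSpace Ω] (P : Measure Ω) (V : Ω → ℝ)
    (σ : ℝ) (N : ℕ) (F : ℝ → ℝ) : Prop :=
  ∀ x : ℝ, F x =
    ∫ z, ((1 / (N:ℝ)) * gq σ (x - z) + (((N:ℝ) - 1) / (N:ℝ)) * gqbar σ x z) * phig P V σ F z

/-!
Replacing `V` by `-V` and `F x` by `-F (-x)` exchanges the two ends, so only `x → ∞` matters. Put
`D = M - F`, `κ = M - φ_F`, `ψ d = M - Ψ⁺ (M - d)` and `p = 1 / N`. Then (E) reads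
`D = p * k + (1 - p) * G`, where `k` is `κ` smoothed by the Gaussian and `G` is the running mean of
`k`; moreover `M - IS = G`, so the claim is about the limit of `G / D`.

The point is that (E) becomes local as `x → ∞`. The survival probability `Π⁺ (F x)` decays at most
exponentially, by comparison with a slowly drifting subsolution, whereas the Gaussian tails are
smaller than any exponential; hence the smoothing only sees `D` near `x`. It follows that `D → 0`,
that `k ≤ C * G`, so that `G` varies slowly, and that `k ≈ ψ ∘ D ≈ L * D` with `L = Ψ⁺ₓ(M)`.
Together with `D = p * k + (1 - p) * G` this is a contraction for the ratios `k / G` and `D / G`,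
and it forces `D / G → (1 - p) / (1 - L * p)`, which is `(N + ρ⁺) / N`.
-/

namespace ImplementationShortfall

section Chebyshev

variable {α : Type*} [MeasurableSpace α] {μ : Measure α} [IsProbabilityMeasure μ] {f g : α → ℝ}

lemma integral_mul_integral_le_of_monovary (hf : Integrable f μ) (hg : Integrable g μ)
    (hfg : Integrable (fun a => f a * g a) μ) (h : Monovary f g) :
    (∫ a, f a ∂μ) * ∫ a, g a ∂μ ≤ ∫ a, f a * g a ∂μ := by
  have h_inner (s : α) : 0 ≤ f s * g s - (f s * ∫ t, g t ∂μ) - g s * (∫ t, f t ∂μ)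
      + ∫ t, f t * g t ∂μ := by
    have h_expand : ∫ t, (f s - f t) * (g s - g t) ∂μ
        = ∫ t, (f s * g s - f s * g t - g s * f t + f t * g t) ∂μ := by
      congr 1; ext t; ring
    have h_nonneg : 0 ≤ ∫ t, (f s - f t) * (g s - g t) ∂μ :=
      integral_nonneg fun t => h.sub_mul_sub_nonneg t s
    rwa [h_expand, integral_add (by fun_prop) hfg, integral_sub (by fun_prop) (by fun_prop),
      integral_sub (by fun_prop) (by fun_prop), integral_const, probReal_univ, one_smul,
      integral_const_mul, integral_const_mul] at h_nonneg
  have h_outer := integral_nonneg (μ := μ) (Pi.le_def.2 h_inner)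
  rw [integral_add (by fun_prop) (by fun_prop), integral_sub (by fun_prop) (by fun_prop),
    integral_sub (by fun_prop) (by fun_prop), integral_mul_const, integral_mul_const,
    integral_const, probReal_univ, one_smul] at h_outer
  linarith

end Chebyshev

/-- Bounded Borel functions on the line, the class on which the averaging operators act. -/
structure IsBddMeasurable (f : ℝ → ℝ) : Prop where
  measurable : Measurable f
  bdd : ∃ C, ∀ x, |f x| ≤ C

namespace IsBddMeasurable

variable {f g : ℝ → ℝ}

lemma const (c : ℝ) : IsBddMeasurable fun _ => c := ⟨measurable_const, |c|, fun _ => le_rfl⟩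

lemma of_mem_Icc {a b : ℝ} (hf : Measurable f) (h : ∀ x, f x ∈ Icc a b) : IsBddMeasurable f :=
  ⟨hf, max |a| |b|, fun x => abs_le_max_abs_abs (h x).1 (h x).2⟩

lemma sub (hf : IsBddMeasurable f) (hg : IsBddMeasurable g) :
    IsBddMeasurable fun x => f x - g x := by
  obtain ⟨⟨A, hA⟩, ⟨B, hB⟩⟩ := hf.bdd, hg.bdd
  exact ⟨hf.measurable.sub hg.measurable, A + B,
    fun x => (abs_sub _ _).trans (add_le_add (hA x) (hB x))⟩

lemma mul (hf : IsBddMeasurable f) (hg : IsBddMeasurable g) :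
    IsBddMeasurable fun x => f x * g x := by
  obtain ⟨⟨A, hA⟩, ⟨B, hB⟩⟩ := hf.bdd, hg.bdd
  refine ⟨hf.measurable.mul hg.measurable, A * B, fun x => ?_⟩
  rw [abs_mul]
  exact mul_le_mul (hA x) (hB x) (abs_nonneg _) ((abs_nonneg _).trans (hA x))

lemma integrable_comp_add {γ : Measure ℝ} [IsFiniteMeasure γ] (hf : IsBddMeasurable f) (x : ℝ) :
    Integrable (fun u => f (x + u)) γ := by
  obtain ⟨C, hC⟩ := hf.bdd
  exact .of_bound (hf.measurable.comp (measurable_const_add x)).aestronglyMeasurable C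
    (.of_forall fun u => hC _)

lemma intervalIntegrable (hf : IsBddMeasurable f) (a b : ℝ) :
    IntervalIntegrable f volume a b := by
  obtain ⟨C, hC⟩ := hf.bdd
  exact (intervalIntegrable_const (c := C)).mono_fun hf.measurable.aestronglyMeasurable
    (.of_forall fun x => (hC x).trans (le_abs_self C))

end IsBddMeasurable

/-- The average of `f` over the translates `x + u`, where `u` has law `γ`. For a centred Gaussian
`γ` this is convolution with the kernel `gq`. -/
noncomputable def shiftMean (γ : Measure ℝ) (f : ℝ → ℝ) (x : ℝ) : ℝ := ∫ u, f (x + u) ∂γ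

/-- The exponential moment of order `l` of the modulus. -/
noncomputable def expMoment (γ : Measure ℝ) (l : ℝ) : ℝ := ∫ u, Real.exp (l * |u|) ∂γ

/-- All exponential moments of `γ` are finite. -/
def HasExpMoments (γ : Measure ℝ) : Prop := ∀ l : ℝ, Integrable (fun u => Real.exp (l * |u|)) γ

section ShiftMean

variable {γ : Measure ℝ} [IsProbabilityMeasure γ] {f g : ℝ → ℝ}

lemma shiftMean_const (c x : ℝ) : shiftMean γ (fun _ => c) x = c := by simp [shiftMean]

lemma shiftMean_mono (hf : IsBddMeasurable f) (hg : IsBddMeasurable g) (h : ∀ x, f x ≤ g x)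
    (x : ℝ) : shiftMean γ f x ≤ shiftMean γ g x :=
  integral_mono (hf.integrable_comp_add x) (hg.integrable_comp_add x) fun _ => h _

lemma shiftMean_sub (hf : IsBddMeasurable f) (hg : IsBddMeasurable g) (x : ℝ) :
    shiftMean γ (fun y => f y - g y) x = shiftMean γ f x - shiftMean γ g x :=
  integral_sub (hf.integrable_comp_add x) (hg.integrable_comp_add x)

lemma shiftMean_le_const (hf : IsBddMeasurable f) {c : ℝ} (h : ∀ x, f x ≤ c) (x : ℝ) :
    shiftMean γ f x ≤ c :=
  (shiftMean_mono hf (.const c) h x).trans_eq (shiftMean_const c x)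

lemma const_le_shiftMean (hf : IsBddMeasurable f) {c : ℝ} (h : ∀ x, c ≤ f x) (x : ℝ) :
    c ≤ shiftMean γ f x :=
  (shiftMean_const c x).symm.trans_le (shiftMean_mono (.const c) hf h x)

lemma IsBddMeasurable.shiftMean (hf : IsBddMeasurable f) :
    IsBddMeasurable (shiftMean γ f) := by
  obtain ⟨C, hC⟩ := hf.bdd
  have h_joint : StronglyMeasurable fun q : ℝ × ℝ => f (q.1 + q.2) :=
    (hf.measurable.comp (measurable_fst.add measurable_snd)).stronglyMeasurable
  exact .of_mem_Icc h_joint.integral_prod_right.measurable fun x =>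
    ⟨const_le_shiftMean hf (fun y => (abs_le.1 (hC y)).1) x,
      shiftMean_le_const hf (fun y => (abs_le.1 (hC y)).2) x⟩

lemma shiftMean_pos (hf : IsBddMeasurable f) (h : ∀ x, 0 < f x) (x : ℝ) :
    0 < shiftMean γ f x := by
  rw [ImplementationShortfall.shiftMean,
    integral_pos_iff_support_of_nonneg (fun u => (h _).le) (hf.integrable_comp_add x)]
  have h_support : Function.support (fun u => f (x + u)) = univ := by
    ext u; simpa using (h (x + u)).ne'
  simp [h_support]

lemma mul_measureReal_le_shiftMean (hf : IsBddMeasurable f) (hf0 : ∀ y, 0 ≤ f y) {s : Set ℝ}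
    (hs : MeasurableSet s) {c x : ℝ} (h : ∀ u ∈ s, c ≤ f (x + u)) :
    c * γ.real s ≤ shiftMean γ f x := by
  calc c * γ.real s = ∫ u, s.indicator (fun _ => c) u ∂γ := by
        rw [integral_indicator hs, setIntegral_const, smul_eq_mul, mul_comm]
    _ ≤ shiftMean γ f x :=
        integral_mono ((integrable_const _).indicator hs) (hf.integrable_comp_add x)
          (indicator_le' h fun u _ => hf0 (x + u))

lemma shiftMean_mul_shiftMean_le_of_monovary (hf : IsBddMeasurable f) (hg : IsBddMeasurable g)
    (h : Monovary f g) (x : ℝ) :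
    shiftMean γ f x * shiftMean γ g x ≤ shiftMean γ (fun y => f y * g y) x :=
  integral_mul_integral_le_of_monovary (hf.integrable_comp_add x) (hg.integrable_comp_add x)
    ((hf.mul hg).integrable_comp_add x) fun _ _ hst => h hst

lemma shiftMean_le_add_mul_expMoment (hγ : HasExpMoments γ) (hf : IsBddMeasurable f)
    {a c l x : ℝ} (h : ∀ u, f (x + u) ≤ c + a * Real.exp (l * |u|)) :
    shiftMean γ f x ≤ c + a * expMoment γ l := by
  have h_int : Integrable (fun u => a * Real.exp (l * |u|)) γ := (hγ l).const_mul a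
  calc shiftMean γ f x
      ≤ ∫ u, (c + a * Real.exp (l * |u|)) ∂γ :=
        integral_mono (hf.integrable_comp_add x) ((integrable_const c).add h_int) h
    _ = c + a * expMoment γ l := by
        rw [integral_add (integrable_const c) h_int, integral_const_mul, integral_const,
          probReal_univ, one_smul, expMoment]

lemma shiftMean_antitone (hf : IsBddMeasurable f) (h : Antitone f) : Antitone (shiftMean γ f) :=
  fun x y hxy => integral_mono (hf.integrable_comp_add y) (hf.integrable_comp_add x)
    fun u => h (add_le_add_left hxy u)

lemma sub_mul_expMoment_le_shiftMean (hγ : HasExpMoments γ) (hf : IsBddMeasurable f)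
    {a c l x : ℝ} (h : ∀ u, c - a * Real.exp (l * |u|) ≤ f (x + u)) :
    c - a * expMoment γ l ≤ shiftMean γ f x := by
  have h_neg := shiftMean_le_add_mul_expMoment (a := a) (c := -c) (l := l) (x := x) hγ
    ((IsBddMeasurable.const 0).sub hf) fun u => by linarith [h u]
  rw [shiftMean_sub (.const 0) hf, shiftMean_const] at h_neg
  linarith

omit [IsProbabilityMeasure γ] in
lemma expMoment_nonneg (l : ℝ) : 0 ≤ expMoment γ l :=
  integral_nonneg fun _ => (Real.exp_pos _).le

lemma shiftMean_le_of_le_on_window (hγ : HasExpMoments γ) (hf : IsBddMeasurable f)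
    {b l r S x : ℝ} (hfb : ∀ y, f y ≤ b) (hb : 0 ≤ b) (hl : 0 ≤ l) (hS : 0 ≤ S)
    (h : ∀ z, |z - x| ≤ r → f z ≤ S) :
    shiftMean γ f x ≤ S + b * expMoment γ l * Real.exp (-(l * r)) := by
  rw [mul_right_comm]
  refine shiftMean_le_add_mul_expMoment hγ hf fun u => ?_
  rw [mul_assoc, ← Real.exp_add]
  rcases le_total |u| r with hu | hu
  · have h_window := h (x + u) (by simpa using hu)
    have h_tail := mul_nonneg hb (Real.exp_pos (-(l * r) + l * |u|)).le
    linarith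
  · have h_one : 1 ≤ Real.exp (-(l * r) + l * |u|) := Real.one_le_exp (by nlinarith)
    nlinarith [hfb (x + u)]

lemma le_shiftMean_of_le_on_window (hγ : HasExpMoments γ) (hf : IsBddMeasurable f)
    {b l r S x : ℝ} (hf0 : ∀ y, 0 ≤ f y) (hl : 0 ≤ l) (hb : 0 ≤ b) (hS : S ≤ b)
    (h : ∀ z, |z - x| ≤ r → S ≤ f z) :
    S - b * expMoment γ l * Real.exp (-(l * r)) ≤ shiftMean γ f x := by
  have h_compl := shiftMean_le_of_le_on_window (l := l) (r := r) (S := b - S) (x := x) hγ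
    ((IsBddMeasurable.const b).sub hf) (fun y => sub_le_self b (hf0 y)) hb hl (sub_nonneg.2 hS)
    fun z hz => sub_le_sub_left (h z hz) b
  rw [shiftMean_sub (.const b) hf, shiftMean_const] at h_compl
  linarith

lemma abs_le_exp_two_mul_abs (u : ℝ) : |u| ≤ Real.exp (2 * |u|) := by
  linarith [Real.add_one_le_exp (2 * |u|), abs_nonneg u]

lemma shiftMean_le_of_le_add_posPart (hγ : HasExpMoments γ) (hf : IsBddMeasurable f)
    (hg : IsBddMeasurable g) {a c : ℝ} (ha : 0 ≤ a)
    (h : ∀ z, f z ≤ g z + a * max z 0 + c) (x : ℝ) :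
    shiftMean γ f x ≤ shiftMean γ g x + a * (max x 0 + expMoment γ 2) + c := by
  have h_diff : shiftMean γ (fun y => f y - g y) x ≤ (a * max x 0 + c) + a * expMoment γ 2 := by
    refine shiftMean_le_add_mul_expMoment hγ (hf.sub hg) fun u => ?_
    have h_max : max (x + u) 0 ≤ max x 0 + Real.exp (2 * |u|) :=
      max_le (by linarith [le_abs_self u, le_max_left x 0, abs_le_exp_two_mul_abs u])
        (add_nonneg (le_max_right _ _) (Real.exp_pos _).le)
    linarith [h (x + u), mul_le_mul_of_nonneg_left h_max ha]
  rw [shiftMean_sub hf hg] at h_diff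
  linarith

lemma shiftMean_shiftMean_le_of_le_add_posPart (hγ : HasExpMoments γ) (hf : IsBddMeasurable f)
    (hg : IsBddMeasurable g) {a : ℝ} (ha : 0 ≤ a) (h : ∀ z, f z ≤ g z + a * max z 0) (x : ℝ) :
    shiftMean γ (shiftMean γ f) x
      ≤ shiftMean γ (shiftMean γ g) x + a * (max x 0 + 2 * expMoment γ 2) := by
  have h_inner := shiftMean_le_of_le_add_posPart (c := 0) hγ hf hg ha
    fun z => (h z).trans_eq (add_zero _).symm
  refine (shiftMean_le_of_le_add_posPart (c := a * expMoment γ 2) hγ hf.shiftMean hg.shiftMean ha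
    (fun z => (h_inner z).trans_eq (by ring)) x).trans_eq (by ring)

end ShiftMean

/-- The mean of `f` over the segment from `0` to `x`, that is `(1 / x) * ∫ y in 0..x, f y`. The
rescaled form has the right value `f 0` at `x = 0`. -/
noncomputable def runMean (f : ℝ → ℝ) (x : ℝ) : ℝ := ∫ t in (0 : ℝ)..1, f (x * t)

/-- The averaging operator of equation (E), with weight `p = 1 / N` at the endpoint `x` and the
remaining weight spread uniformly between `0` and `x`. -/
noncomputable def mixMean (p : ℝ) (f : ℝ → ℝ) (x : ℝ) : ℝ := p * f x + (1 - p) * runMean f x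

section RunMean

variable {f g : ℝ → ℝ} {p x : ℝ}

lemma mul_runMean (f : ℝ → ℝ) (x : ℝ) : x * runMean f x = ∫ y in (0 : ℝ)..x, f y := by
  rw [runMean, intervalIntegral.mul_integral_comp_mul_left, mul_zero, mul_one]

lemma IsBddMeasurable.intervalIntegrable_comp_mul (hf : IsBddMeasurable f) (x : ℝ) :
    IntervalIntegrable (fun t => f (x * t)) volume 0 1 :=
  IsBddMeasurable.intervalIntegrable
    ⟨hf.measurable.comp (measurable_const_mul x), hf.bdd.imp fun _ hC t => hC (x * t)⟩ 0 1

lemma runMean_le_add_affine (hf : IsBddMeasurable f) (hg : IsBddMeasurable g) {α β : ℝ}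
    (h : ∀ y ∈ uIcc 0 x, f y ≤ g y + (α * y + β)) :
    runMean f x ≤ runMean g x + (α * (x / 2) + β) := by
  have h_affine : IntervalIntegrable (fun t => α * (x * t) + β) volume 0 1 :=
    Continuous.intervalIntegrable (by fun_prop) 0 1
  calc runMean f x
      ≤ ∫ t in (0 : ℝ)..1, (g (x * t) + (α * (x * t) + β)) := by
        refine intervalIntegral.integral_mono_on zero_le_one (hf.intervalIntegrable_comp_mul x)
          ((hg.intervalIntegrable_comp_mul x).add h_affine) fun t ht => h _ ?_
        rcases le_total 0 x with hx | hx
        · rw [uIcc_of_le hx]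
          exact ⟨mul_nonneg hx ht.1, mul_le_of_le_one_right hx ht.2⟩
        · rw [uIcc_of_ge hx]
          exact ⟨le_mul_of_le_one_right hx ht.2, mul_nonpos_of_nonpos_of_nonneg hx ht.1⟩
    _ = runMean g x + (α * (x / 2) + β) := by
        rw [intervalIntegral.integral_add (hg.intervalIntegrable_comp_mul x) h_affine,
          intervalIntegral.integral_add (Continuous.intervalIntegrable (by fun_prop) 0 1)
            (intervalIntegrable_const), intervalIntegral.integral_const_mul,
          intervalIntegral.integral_const_mul, integral_id, intervalIntegral.integral_const,
          runMean, smul_eq_mul]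
        ring

lemma runMean_const (c x : ℝ) : runMean (fun _ => c) x = c := by simp [runMean]

lemma runMean_mono (hf : IsBddMeasurable f) (hg : IsBddMeasurable g)
    (h : ∀ y ∈ uIcc 0 x, f y ≤ g y) : runMean f x ≤ runMean g x := by
  simpa using runMean_le_add_affine (α := 0) (β := 0) hf hg (by simpa using h)

lemma le_runMean (hf : IsBddMeasurable f) {c : ℝ} (h : ∀ y ∈ uIcc 0 x, c ≤ f y) :
    c ≤ runMean f x :=
  (runMean_const c x).symm.trans_le (runMean_mono (.const c) hf h)

lemma eventually_runMean_le (hf : IsBddMeasurable f) {S η : ℝ} (hη : 0 < η)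
    (h : ∀ᶠ y in atTop, f y ≤ S) : ∀ᶠ x in atTop, runMean f x ≤ S + η := by
  obtain ⟨Y, hY⟩ := eventually_atTop.1 h
  set I := ∫ y in (0 : ℝ)..Y, f y
  filter_upwards [eventually_ge_atTop Y, eventually_gt_atTop 0,
    eventually_ge_atTop ((I - Y * S) / η)] with x hxY hx hxI
  have h_tail : ∫ y in Y..x, f y ≤ ∫ _ in Y..x, S :=
    intervalIntegral.integral_mono_on hxY (hf.intervalIntegrable Y x) intervalIntegrable_const
      fun y hy => hY y hy.1
  rw [intervalIntegral.integral_const, smul_eq_mul] at h_tail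
  rw [div_le_iff₀ hη] at hxI
  refine le_of_mul_le_mul_left ?_ hx
  rw [mul_runMean, ← intervalIntegral.integral_add_adjacent_intervals (hf.intervalIntegrable 0 Y)
    (hf.intervalIntegrable Y x)]
  linarith

lemma le_runMean_of_antitone (hf : IsBddMeasurable f) (h_anti : Antitone f) {A B K : ℝ}
    (hK : 0 ≤ K) (hKx : K ≤ x) (hA : A ≤ f (x - K)) (hB : B ≤ f x) :
    (x - K) * A + K * B ≤ x * runMean f x := by
  have h_left : (x - K) * A ≤ (x - K) * runMean f (x - K) := by
    refine mul_le_mul_of_nonneg_left (le_runMean hf fun y hy => hA.trans (h_anti ?_))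
      (sub_nonneg.2 hKx)
    rw [uIcc_of_le (sub_nonneg.2 hKx)] at hy
    exact hy.2
  have h_right : ∫ _ in (x - K)..x, B ≤ ∫ y in (x - K)..x, f y :=
    intervalIntegral.integral_mono_on (sub_le_self x hK) intervalIntegrable_const
      (hf.intervalIntegrable _ _) fun y hy => hB.trans (h_anti hy.2)
  rw [intervalIntegral.integral_const, sub_sub_cancel, smul_eq_mul] at h_right
  rw [mul_runMean, ← intervalIntegral.integral_add_adjacent_intervals
    (hf.intervalIntegrable 0 (x - K)) (hf.intervalIntegrable (x - K) x), ← mul_runMean]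
  exact add_le_add h_left h_right

lemma mixMean_mono (hp0 : 0 ≤ p) (hp1 : p ≤ 1) (hf : IsBddMeasurable f) (hg : IsBddMeasurable g)
    (h : ∀ y, f y ≤ g y) : mixMean p f x ≤ mixMean p g x :=
  add_le_add (mul_le_mul_of_nonneg_left (h x) hp0)
    (mul_le_mul_of_nonneg_left (runMean_mono hf hg fun y _ => h y) (sub_nonneg.2 hp1))

lemma le_mixMean (hp0 : 0 ≤ p) (hp1 : p ≤ 1) (hf : IsBddMeasurable f) {c : ℝ}
    (h : ∀ y ∈ uIcc 0 x, c ≤ f y) : c ≤ mixMean p f x := by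
  have h_endpoint := mul_le_mul_of_nonneg_left (h x right_mem_uIcc) hp0
  have h_mean := mul_le_mul_of_nonneg_left (le_runMean hf h) (sub_nonneg.2 hp1)
  rw [mixMean]
  linarith

end RunMean

lemma abs_sub_le_of_abs_deriv_le {f g f' g' : ℝ → ℝ} {x y K : ℝ} (hxy : x ≤ y)
    (hf : ∀ t ∈ Icc x y, HasDerivAt f (f' t) t) (hg : ∀ t ∈ Icc x y, HasDerivAt g (g' t) t)
    (h : ∀ t ∈ Icc x y, |f' t| ≤ K * g' t) : |f y - f x| ≤ K * (g y - g x) := by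
  have h_mono {φ φ' : ℝ → ℝ} (hφ : ∀ t ∈ Icc x y, HasDerivAt φ (φ' t) t)
      (hφ' : ∀ t ∈ Icc x y, 0 ≤ φ' t) : φ x ≤ φ y :=
    monotoneOn_of_deriv_nonneg (convex_Icc x y)
      (fun t ht => (hφ t ht).continuousAt.continuousWithinAt)
      (fun t ht => (hφ t (interior_subset ht)).differentiableAt.differentiableWithinAt)
      (fun t ht => (hφ t (interior_subset ht)).deriv ▸ hφ' t (interior_subset ht))
      (left_mem_Icc.2 hxy) (right_mem_Icc.2 hxy) hxy
  have h_upper := h_mono (fun t ht => ((hg t ht).const_mul K).sub (hf t ht))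
    fun t ht => sub_nonneg.2 ((le_abs_self _).trans (h t ht))
  have h_lower := h_mono (fun t ht => ((hg t ht).const_mul K).add (hf t ht))
    fun t ht => by linarith [neg_abs_le (f' t), h t ht]
  simp only [Pi.sub_apply, Pi.add_apply] at h_upper h_lower
  exact abs_le.2 ⟨by linarith, by linarith⟩

/-- The law of `V` near its upper endpoint `M`, in the coordinate `d = M - y ∈ (0, b)`:
`w d = Π⁺(M - d)`, `ψ d = M - Ψ⁺(M - d)`, and `L` is the limit of `Ψ⁺ₓ` at `M`. The relation
`(Ψ⁺)' Π⁺ = (Π⁺)' (y - Ψ⁺)` becomes a formula for the logarithmic derivative of `w`. -/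
structure EndpointLaw (b L : ℝ) (w ψ : ℝ → ℝ) : Prop where
  b_pos : 0 < b
  measurable_w : Measurable w
  measurable_psi : Measurable ψ
  w_pos : ∀ d ∈ Ioo 0 b, 0 < w d
  w_le_one : ∀ d ∈ Ioo 0 b, w d ≤ 1
  w_mono : MonotoneOn w (Ioo 0 b)
  psi_nonneg : ∀ d ∈ Ioo 0 b, 0 ≤ ψ d
  psi_lt : ∀ d ∈ Ioo 0 b, ψ d < d
  psi_mono : MonotoneOn ψ (Ioo 0 b)
  differentiableAt_psi : ∀ d ∈ Ioo 0 b, DifferentiableAt ℝ ψ d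
  hasDerivAt_log_w : ∀ d ∈ Ioo 0 b,
    HasDerivAt (fun t => Real.log (w t)) (deriv ψ d / (d - ψ d)) d
  tendsto_deriv_psi : Tendsto (deriv ψ) (nhdsWithin 0 (Ioi 0)) (nhds L)

namespace EndpointLaw

variable {b L : ℝ} {w ψ : ℝ → ℝ}

lemma exists_deriv_near (h : EndpointLaw b L w ψ) {η δ₀ : ℝ} (hη : 0 < η) (hδ₀ : 0 < δ₀) :
    ∃ δ ∈ Ioo 0 b, δ ≤ δ₀ ∧ ∀ d ∈ Ioc 0 δ, |deriv ψ d - L| ≤ η := by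
  obtain ⟨e, he, h_near⟩ := mem_nhdsGT_iff_exists_Ioo_subset.1
    (h.tendsto_deriv_psi (Metric.closedBall_mem_nhds L hη))
  have hb := h.b_pos
  have he' : 0 < e := he
  refine ⟨min δ₀ (min (b / 2) (e / 2)), ⟨by positivity, ?_⟩, min_le_left _ _, fun d hd => ?_⟩
  · exact (min_le_right _ _).trans_lt ((min_le_left _ _).trans_lt (half_lt_self hb))
  · exact h_near ⟨hd.1, hd.2.trans_lt
      ((min_le_right _ _).trans_lt ((min_le_right _ _).trans_lt (half_lt_self he')))⟩

lemma abs_psi_sub_mul_le (h : EndpointLaw b L w ψ) {η δ : ℝ} (hδ : δ < b)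
    (h_deriv : ∀ d ∈ Ioc 0 δ, |deriv ψ d - L| ≤ η) {d : ℝ} (hd : d ∈ Ioc 0 δ) :
    |ψ d - L * d| ≤ η * d := by
  have h_mvt {t : ℝ} (ht0 : 0 < t) (htd : t ≤ d) :
      |(ψ d - L * d) - (ψ t - L * t)| ≤ η * (d - t) :=
    abs_sub_le_of_abs_deriv_le (f := fun y => ψ y - L * y) (g := id) (g' := fun _ => 1) htd
      (fun y hy => (h.differentiableAt_psi y
        ⟨ht0.trans_le hy.1, (hy.2.trans hd.2).trans_lt hδ⟩).hasDerivAt.sub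
          ((hasDerivAt_id y).const_mul L))
      (fun y _ => hasDerivAt_id y)
      fun y hy => by simpa using h_deriv y ⟨ht0.trans_le hy.1, hy.2.trans hd.2⟩
  have h_small : ∀ᶠ t in nhdsWithin (0 : ℝ) (Ioi 0), t ∈ Ioo 0 d :=
    Ioo_mem_nhdsGT hd.1
  have h_id : Tendsto (fun t : ℝ => t) (nhdsWithin 0 (Ioi 0)) (nhds 0) :=
    tendsto_id.mono_left nhdsWithin_le_nhds
  have h_psi : Tendsto ψ (nhdsWithin 0 (Ioi 0)) (nhds 0) := by
    have h_mem {t : ℝ} (ht : t ∈ Ioo 0 d) : t ∈ Ioo 0 b :=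
      ⟨ht.1, ht.2.trans (hd.2.trans_lt hδ)⟩
    exact squeeze_zero' (h_small.mono fun t ht => h.psi_nonneg t (h_mem ht))
      (h_small.mono fun t ht => (h.psi_lt t (h_mem ht)).le) h_id
  simpa using le_of_tendsto_of_tendsto
    ((h_psi.sub (h_id.const_mul L)).const_sub (ψ d - L * d)).abs ((h_id.const_sub d).const_mul η)
    (h_small.mono fun t ht => h_mvt ht.1 ht.2.le)

lemma L_nonneg (h : EndpointLaw b L w ψ) : 0 ≤ L := by
  by_contra! hL
  obtain ⟨δ, hδ, -, h_deriv⟩ := h.exists_deriv_near (η := -L / 2) (by linarith) one_pos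
  have h_upper := (abs_le.1 (h.abs_psi_sub_mul_le hδ.2 h_deriv ⟨hδ.1, le_rfl⟩)).2
  nlinarith [h.psi_nonneg δ hδ, hδ.1]

lemma L_le_one (h : EndpointLaw b L w ψ) : L ≤ 1 := by
  by_contra! hL
  obtain ⟨δ, hδ, -, h_deriv⟩ := h.exists_deriv_near (η := (L - 1) / 2) (by linarith) one_pos
  have h_lower := (abs_le.1 (h.abs_psi_sub_mul_le hδ.2 h_deriv ⟨hδ.1, le_rfl⟩)).1
  nlinarith [h.psi_lt δ hδ, hδ.1]

lemma abs_log_w_sub_le (h : EndpointLaw b L w ψ) (hL : L < 1) :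
    ∃ δ ∈ Ioo 0 b, ∀ d ∈ Ioc 0 δ,
      |Real.log (w δ) - Real.log (w d)| ≤ 2 / (1 - L) * (Real.log δ - Real.log d) := by
  obtain ⟨δ, hδ, -, h_deriv⟩ := h.exists_deriv_near (η := (1 - L) / 2) (by linarith) one_pos
  refine ⟨δ, hδ, fun d hd => abs_sub_le_of_abs_deriv_le hd.2
    (fun y hy => h.hasDerivAt_log_w y ⟨hd.1.trans_le hy.1, hy.2.trans_lt hδ.2⟩)
    (fun y hy => Real.hasDerivAt_log (hd.1.trans_le hy.1).ne') fun y hy => ?_⟩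
  have hy' : y ∈ Ioc 0 δ := ⟨hd.1.trans_le hy.1, hy.2⟩
  have h_near := abs_le.1 (h_deriv y hy')
  have h_psi := (abs_le.1 (h.abs_psi_sub_mul_le hδ.2 h_deriv hy')).2
  have h_gap : (1 - L) / 2 * y ≤ y - ψ y := by linarith
  have h_one : |deriv ψ y| ≤ 1 := abs_le.2 ⟨by linarith [h.L_nonneg], by linarith⟩
  have h_gap_pos : 0 < (1 - L) / 2 * y := mul_pos (by linarith) hy'.1
  rw [abs_div, abs_of_pos (h_gap_pos.trans_le h_gap)]
  calc |deriv ψ y| / (y - ψ y) ≤ 1 / ((1 - L) / 2 * y) :=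
        div_le_div₀ zero_le_one h_one h_gap_pos h_gap
    _ = 2 / (1 - L) * y⁻¹ := by
        have hL' : 1 - L ≠ 0 := by linarith
        have hy0 := hy'.1.ne'
        field_simp

variable {δ ε : ℝ}

lemma strictMonoOn_log_w (h : EndpointLaw b L w ψ) (hδ : δ < b)
    (h_deriv : ∀ d ∈ Ioc 0 δ, 0 < deriv ψ d) :
    StrictMonoOn (fun d => Real.log (w d)) (Ioc 0 δ) := by
  have h_mem {d : ℝ} (hd : d ∈ Ioc 0 δ) : d ∈ Ioo 0 b := ⟨hd.1, hd.2.trans_lt hδ⟩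
  refine strictMonoOn_of_deriv_pos (convex_Ioc 0 δ)
    (fun d hd => (h.hasDerivAt_log_w d (h_mem hd)).continuousAt.continuousWithinAt)
    fun d hd => ?_
  have hd' := interior_subset hd
  rw [(h.hasDerivAt_log_w d (h_mem hd')).deriv]
  exact div_pos (h_deriv d hd') (sub_pos.2 (h.psi_lt d (h_mem hd')))

lemma abs_log_gap_sub_le (h : EndpointLaw b L w ψ) (hδ : δ < b) (hε : ε ≤ 1 / 2)
    (h_deriv : ∀ d ∈ Ioc 0 δ, |deriv ψ d - 1| ≤ ε) {d₁ d₂ : ℝ} (h₁ : 0 < d₁) (h₁₂ : d₁ ≤ d₂)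
    (h₂ : d₂ ≤ δ) :
    |Real.log (d₂ - ψ d₂) - Real.log (d₁ - ψ d₁)|
      ≤ 2 * ε * (Real.log (w d₂) - Real.log (w d₁)) := by
  have h_mem {y : ℝ} (hy : y ∈ Icc d₁ d₂) : y ∈ Ioc 0 δ := ⟨h₁.trans_le hy.1, hy.2.trans h₂⟩
  have h_mem' {y : ℝ} (hy : y ∈ Icc d₁ d₂) : y ∈ Ioo 0 b :=
    ⟨(h_mem hy).1, (h_mem hy).2.trans_lt hδ⟩
  have h_gap {y : ℝ} (hy : y ∈ Icc d₁ d₂) : 0 < y - ψ y := sub_pos.2 (h.psi_lt y (h_mem' hy))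
  refine abs_sub_le_of_abs_deriv_le h₁₂
    (fun y hy => ((hasDerivAt_id y).sub (h.differentiableAt_psi y (h_mem' hy)).hasDerivAt).log
      (h_gap hy).ne') (fun y hy => h.hasDerivAt_log_w y (h_mem' hy)) fun y hy => ?_
  have h_near := h_deriv y (h_mem hy)
  simp only [Pi.sub_apply, id]
  rw [abs_div, abs_of_pos (h_gap hy), ← mul_div_assoc, abs_sub_comm]
  refine div_le_div_of_nonneg_right ?_ (h_gap hy).le
  nlinarith [abs_le.1 h_near, abs_nonneg (deriv ψ y - 1)]

lemma gap_le_mul_exp (h : EndpointLaw b L w ψ) (hδ : δ < b) (hε : ε ≤ 1 / 2)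
    (h_deriv : ∀ d ∈ Ioc 0 δ, |deriv ψ d - 1| ≤ ε) {d₁ d₂ : ℝ} (h₁ : d₁ ∈ Ioc 0 δ)
    (h₂ : d₂ ∈ Ioc 0 δ) :
    d₁ - ψ d₁ ≤ (d₂ - ψ d₂) * Real.exp (2 * ε * |Real.log (w d₁) - Real.log (w d₂)|) := by
  have hε0 : 0 ≤ ε := (abs_nonneg _).trans (h_deriv d₁ h₁)
  have h_gap {d : ℝ} (hd : d ∈ Ioc 0 δ) : 0 < d - ψ d :=
    sub_pos.2 (h.psi_lt d ⟨hd.1, hd.2.trans_lt hδ⟩)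
  have h_log : |Real.log (d₁ - ψ d₁) - Real.log (d₂ - ψ d₂)|
      ≤ 2 * ε * |Real.log (w d₁) - Real.log (w d₂)| := by
    rcases le_total d₁ d₂ with h_le | h_le
    · rw [abs_sub_comm, abs_sub_comm (Real.log (w d₁))]
      exact (h.abs_log_gap_sub_le hδ hε h_deriv h₁.1 h_le h₂.2).trans
        (mul_le_mul_of_nonneg_left (le_abs_self _) (by positivity))
    · exact (h.abs_log_gap_sub_le hδ hε h_deriv h₂.1 h_le h₁.2).trans
        (mul_le_mul_of_nonneg_left (le_abs_self _) (by positivity))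
  rw [← Real.log_le_log_iff (h_gap h₁) (mul_pos (h_gap h₂) (Real.exp_pos _)),
    Real.log_mul (h_gap h₂).ne' (Real.exp_pos _).ne', Real.log_exp]
  linarith [(abs_le.1 h_log).2]

lemma deriv_pos_of_near_one (hε : ε ≤ 1 / 2) (h_deriv : ∀ d ∈ Ioc 0 δ, |deriv ψ d - 1| ≤ ε)
    {d : ℝ} (hd : d ∈ Ioc 0 δ) : 0 < deriv ψ d := by
  linarith [(abs_le.1 (h_deriv d hd)).1]

lemma psi_sub_le (h : EndpointLaw b L w ψ) (hδ : δ < b) (hε : ε ≤ 1 / 2)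
    (h_deriv : ∀ d ∈ Ioc 0 δ, |deriv ψ d - 1| ≤ ε) {d₁ d₂ U : ℝ} (h₁ : d₁ ∈ Ioc 0 δ)
    (h₂ : d₂ ∈ Ioc 0 δ) (h₁₂ : d₁ ≤ d₂) (hU : Real.log (w d₂) - Real.log (w d₁) ≤ U) :
    ψ d₂ - ψ d₁ ≤ (d₂ - ψ d₂) * Real.exp (2 * ε * U) * U := by
  have h_mem {y : ℝ} (hy : y ∈ Icc d₁ d₂) : y ∈ Ioc 0 δ := ⟨h₁.1.trans_le hy.1, hy.2.trans h₂.2⟩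
  have h_mem' {y : ℝ} (hy : y ∈ Icc d₁ d₂) : y ∈ Ioo 0 b :=
    ⟨(h_mem hy).1, (h_mem hy).2.trans_lt hδ⟩
  have h_logw := (h.strictMonoOn_log_w hδ
    fun d hd => deriv_pos_of_near_one hε h_deriv hd).monotoneOn
  have h_gap_pos : 0 < d₂ - ψ d₂ := sub_pos.2 (h.psi_lt d₂ ⟨h₂.1, h₂.2.trans_lt hδ⟩)
  refine (le_abs_self _).trans ((abs_sub_le_of_abs_deriv_le h₁₂
    (fun y hy => (h.differentiableAt_psi y (h_mem' hy)).hasDerivAt)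
    (fun y hy => h.hasDerivAt_log_w y (h_mem' hy)) fun y hy => ?_).trans
    (mul_le_mul_of_nonneg_left hU (mul_pos h_gap_pos (Real.exp_pos _)).le))
  have h_pos := deriv_pos_of_near_one hε h_deriv (h_mem hy)
  have h_gap : y - ψ y ≤ (d₂ - ψ d₂) * Real.exp (2 * ε * U) := by
    refine (h.gap_le_mul_exp hδ hε h_deriv (h_mem hy) h₂).trans
      (mul_le_mul_of_nonneg_left (Real.exp_le_exp.2 ?_) h_gap_pos.le)
    rw [abs_sub_comm, abs_of_nonneg (sub_nonneg.2 (h_logw (h_mem hy) h₂ hy.2))]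
    exact mul_le_mul_of_nonneg_left (by linarith [h_logw h₁ (h_mem hy) hy.1])
      (mul_nonneg zero_le_two ((abs_nonneg _).trans (h_deriv d₂ h₂)))
  rw [abs_of_pos h_pos, mul_div_left_comm]
  exact le_mul_of_one_le_right h_pos.le
    ((one_le_div (sub_pos.2 (h.psi_lt y (h_mem' hy)))).2 h_gap)

lemma le_psi_sub (h : EndpointLaw b L w ψ) (hδ : δ < b) (hε : ε ≤ 1 / 2)
    (h_deriv : ∀ d ∈ Ioc 0 δ, |deriv ψ d - 1| ≤ ε) {d₁ d₂ U : ℝ} (h₁ : d₁ ∈ Ioc 0 δ)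
    (h₂ : d₂ ∈ Ioc 0 δ) (h₁₂ : d₁ ≤ d₂) (hU : Real.log (w d₂) - Real.log (w d₁) = U) :
    (d₁ - ψ d₁) * Real.exp (-(2 * ε * U)) * U ≤ ψ d₂ - ψ d₁ := by
  have h_mem {y : ℝ} (hy : y ∈ Icc d₁ d₂) : y ∈ Ioc 0 δ := ⟨h₁.1.trans_le hy.1, hy.2.trans h₂.2⟩
  have h_mem' {y : ℝ} (hy : y ∈ Icc d₁ d₂) : y ∈ Ioo 0 b :=
    ⟨(h_mem hy).1, (h_mem hy).2.trans_lt hδ⟩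
  have h_logw := (h.strictMonoOn_log_w hδ
    fun d hd => deriv_pos_of_near_one hε h_deriv hd).monotoneOn
  have h_gap_pos : 0 < d₁ - ψ d₁ := sub_pos.2 (h.psi_lt d₁ ⟨h₁.1, h₁.2.trans_lt hδ⟩)
  set S := (d₁ - ψ d₁) * Real.exp (-(2 * ε * U)) with hS
  have hS_pos : 0 < S := mul_pos h_gap_pos (Real.exp_pos _)
  have h_gap {y : ℝ} (hy : y ∈ Icc d₁ d₂) : S ≤ y - ψ y := by
    rw [hS, Real.exp_neg, ← div_eq_mul_inv, div_le_iff₀ (Real.exp_pos _)]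
    refine (h.gap_le_mul_exp hδ hε h_deriv h₁ (h_mem hy)).trans
      (mul_le_mul_of_nonneg_left (Real.exp_le_exp.2 ?_) (sub_pos.2 (h.psi_lt y (h_mem' hy))).le)
    rw [abs_sub_comm, abs_of_nonneg (sub_nonneg.2 (h_logw h₁ (h_mem hy) hy.1))]
    exact mul_le_mul_of_nonneg_left (by linarith [h_logw (h_mem hy) h₂ hy.2])
      (mul_nonneg zero_le_two ((abs_nonneg _).trans (h_deriv d₂ h₂)))
  have h_log := (le_abs_self _).trans (abs_sub_le_of_abs_deriv_le (K := S⁻¹) h₁₂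
    (fun y hy => h.hasDerivAt_log_w y (h_mem' hy))
    (fun y hy => (h.differentiableAt_psi y (h_mem' hy)).hasDerivAt) fun y hy => by
      have h_pos := deriv_pos_of_near_one hε h_deriv (h_mem hy)
      rw [abs_of_pos (div_pos h_pos (hS_pos.trans_le (h_gap hy))), ← div_eq_inv_mul]
      exact div_le_div_of_nonneg_left h_pos.le hS_pos (h_gap hy))
  rwa [hU, ← div_eq_inv_mul, le_div_iff₀' hS_pos] at h_log

lemma exists_log_w_eq_sub (h : EndpointLaw b L w ψ) (hw : ∀ c > 0, ∃ d ∈ Ioo 0 b, w d < c)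
    (hδ : δ ∈ Ioo 0 b) {t : ℝ} (ht : 0 ≤ t) :
    ∃ d ∈ Ioc 0 δ, Real.log (w d) = Real.log (w δ) - t := by
  have hwδ := h.w_pos δ hδ
  obtain ⟨d₀, hd₀, h_lt⟩ := hw (w δ * Real.exp (-t)) (by positivity)
  have h_log_lt : Real.log (w d₀) < Real.log (w δ) - t := by
    have := Real.log_lt_log (h.w_pos d₀ hd₀) h_lt
    rwa [Real.log_mul hwδ.ne' (Real.exp_pos _).ne', Real.log_exp] at this
  have h_le : d₀ ≤ δ := by
    by_contra! h_gt
    have := Real.log_le_log hwδ (h.w_mono hδ hd₀ h_gt.le)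
    linarith
  obtain ⟨d, hd, h_eq⟩ := intermediate_value_Icc h_le
    (fun y hy => (h.hasDerivAt_log_w y
      ⟨hd₀.1.trans_le hy.1, hy.2.trans_lt hδ.2⟩).continuousAt.continuousWithinAt)
    ⟨h_log_lt.le, sub_le_self _ ht⟩
  exact ⟨d, ⟨hd₀.1.trans_le hd.1, hd.2⟩, h_eq⟩

end EndpointLaw

/-- A function `a` drifting downwards at a slowly varying speed `s`: an integrated form of
`a' = -s`, `|s'| ≤ θ s`, where the lower bound on the drift is only required from `x₁` on. -/
structure SlowDrift (θ x₁ : ℝ) (a s : ℝ → ℝ) : Prop where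
  bdd : IsBddMeasurable a
  bdd_speed : IsBddMeasurable s
  anti : Antitone a
  speed_pos : ∀ x, 0 < s x
  speed_le : ∀ x y, s x ≤ s y * Real.exp (θ * |x - y|)
  sub_le : ∀ x u, 0 ≤ u → a x - a (x + u) ≤ s x * Real.exp (θ * u) * u
  le_sub : ∀ x u, x₁ ≤ x → 0 ≤ u → s (x + u) * Real.exp (-(θ * u)) * u ≤ a x - a (x + u)

lemma abs_max_sub_zero_sub_le (x y z : ℝ) : |max (x - z) 0 - max (y - z) 0| ≤ |x - y| := by
  simpa using abs_max_sub_max_le_abs (x - z) (y - z) 0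

lemma EndpointLaw.slowDrift {b L δ ε x₁ : ℝ} {w ψ β : ℝ → ℝ} (h : EndpointLaw b L w ψ)
    (hδ : δ < b) (hε0 : 0 ≤ ε) (hε : ε ≤ 1 / 2) (h_deriv : ∀ d ∈ Ioc 0 δ, |deriv ψ d - 1| ≤ ε)
    (hβ : ∀ x, β x ∈ Ioc 0 δ)
    (h_log : ∀ x, Real.log (w (β x)) = Real.log (w δ) - max (x - x₁) 0) :
    SlowDrift (2 * ε) x₁ (fun x => ψ (β x)) (fun x => β x - ψ (β x)) := by
  have h_mem (x : ℝ) : β x ∈ Ioo 0 b := ⟨(hβ x).1, (hβ x).2.trans_lt hδ⟩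
  have h_anti : Antitone β := fun x y hxy => by
    refine ((h.strictMonoOn_log_w hδ fun d hd => deriv_pos_of_near_one hε h_deriv hd).le_iff_le
      (hβ y) (hβ x)).1 ?_
    simp only [h_log]
    gcongr
  have h_psi : Antitone fun x => ψ (β x) :=
    fun x y hxy => h.psi_mono (h_mem y) (h_mem x) (h_anti hxy)
  have h_bdd : IsBddMeasurable fun x => ψ (β x) := .of_mem_Icc (a := 0) (b := b) h_psi.measurable
    fun x => ⟨h.psi_nonneg _ (h_mem x), ((h.psi_lt _ (h_mem x)).trans (h_mem x).2).le⟩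
  refine ⟨h_bdd, .sub (.of_mem_Icc h_anti.measurable fun x => ⟨(hβ x).1.le, (hβ x).2⟩) h_bdd,
    h_psi, fun x => sub_pos.2 (h.psi_lt _ (h_mem x)), fun x y => ?_, fun x u hu => ?_,
    fun x u hx hu => ?_⟩
  · refine (h.gap_le_mul_exp hδ hε h_deriv (hβ x) (hβ y)).trans (mul_le_mul_of_nonneg_left
      (Real.exp_le_exp.2 ?_) (sub_pos.2 (h.psi_lt _ (h_mem y))).le)
    rw [h_log, h_log, sub_sub_sub_cancel_left, abs_sub_comm]
    exact mul_le_mul_of_nonneg_left (abs_max_sub_zero_sub_le x y x₁) (by positivity)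
  · refine h.psi_sub_le hδ hε h_deriv (hβ (x + u)) (hβ x) (h_anti (le_add_of_nonneg_right hu)) ?_
    rw [h_log, h_log, sub_sub_sub_cancel_left]
    refine (le_abs_self _).trans ((abs_max_sub_zero_sub_le _ _ _).trans ?_)
    rw [add_sub_cancel_left, abs_of_nonneg hu]
  · refine h.le_psi_sub hδ hε h_deriv (hβ (x + u)) (hβ x) (h_anti (le_add_of_nonneg_right hu)) ?_
    rw [h_log, h_log, max_eq_left (by linarith), max_eq_left (by linarith)]
    ring

namespace SlowDrift

variable {θ x₁ : ℝ} {a s : ℝ → ℝ}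

lemma speed_add_le (h : SlowDrift θ x₁ a s) (hθ : θ ≤ 1) (x u : ℝ) :
    s (x + u) ≤ s x * Real.exp (2 * |u|) := by
  refine (h.speed_le (x + u) x).trans
    (mul_le_mul_of_nonneg_left (Real.exp_le_exp.2 ?_) (h.speed_pos x).le)
  rw [add_sub_cancel_left]
  nlinarith [abs_nonneg u]

lemma sub_mul_exp_le (h : SlowDrift θ x₁ a s) (hθ : θ ≤ 1) (x u : ℝ) :
    a x - s x * Real.exp (2 * |u|) ≤ a (x + u) := by
  rcases le_total u 0 with hu | hu
  · linarith [h.anti (add_le_of_nonpos_right hu : x + u ≤ x),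
      mul_pos (h.speed_pos x) (Real.exp_pos (2 * |u|))]
  · have h_exp : Real.exp (θ * u) * u ≤ Real.exp (2 * |u|) := by
      calc Real.exp (θ * u) * u ≤ Real.exp u * Real.exp u := by
            gcongr
            · nlinarith
            · linarith [Real.add_one_le_exp u]
        _ = Real.exp (2 * |u|) := by rw [← Real.exp_add, abs_of_nonneg hu, two_mul]
    have h_drift := h.sub_le x u hu
    rw [mul_assoc] at h_drift
    linarith [mul_le_mul_of_nonneg_left h_exp (h.speed_pos x).le]

variable {γ : Measure ℝ} [IsProbabilityMeasure γ]

lemma sub_le_shiftMean (h : SlowDrift θ x₁ a s) (hγ : HasExpMoments γ) (hθ : θ ≤ 1) (x : ℝ) :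
    a x - s x * expMoment γ 2 ≤ shiftMean γ a x :=
  sub_mul_expMoment_le_shiftMean hγ h.bdd (h.sub_mul_exp_le hθ x)

lemma shiftMean_speed_le (h : SlowDrift θ x₁ a s) (hγ : HasExpMoments γ) (hθ : θ ≤ 1) (x : ℝ) :
    shiftMean γ s x ≤ s x * expMoment γ 2 := by
  simpa using shiftMean_le_add_mul_expMoment (c := 0) hγ h.bdd_speed
    fun u => (h.speed_add_le hθ x u).trans_eq (zero_add _).symm

lemma sub_le_shiftMean_shiftMean (h : SlowDrift θ x₁ a s) (hγ : HasExpMoments γ) (hθ : θ ≤ 1)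
    (x : ℝ) :
    a x - (expMoment γ 2 + expMoment γ 2 ^ 2) * s x ≤ shiftMean γ (shiftMean γ a) x := by
  set c := expMoment γ 2
  have h_bdd : IsBddMeasurable fun y => s y * c := h.bdd_speed.mul (.const c)
  have h_outer : shiftMean γ (fun y => a y - s y * c) x ≤ shiftMean γ (shiftMean γ a) x :=
    shiftMean_mono (h.bdd.sub h_bdd) h.bdd.shiftMean (h.sub_le_shiftMean hγ hθ) x
  rw [shiftMean_sub h.bdd h_bdd] at h_outer
  have h_speed : shiftMean γ (fun y => s y * c) x ≤ s x * c * c := by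
    rw [shiftMean, integral_mul_const]
    exact mul_le_mul_of_nonneg_right (h.shiftMean_speed_le hγ hθ x) (expMoment_nonneg 2)
  linarith [h.sub_le_shiftMean hγ hθ x]

lemma add_le_shiftMean_shiftMean_sub (h : SlowDrift θ x₁ a s) (hγ : HasExpMoments γ)
    (hθ : θ ≤ 1) {K x : ℝ} (hK : 0 ≤ K) (hθK : θ * K ≤ 1 / 4) (hx : x₁ + K ≤ x) :
    a x + (K / 2 - 2 * (expMoment γ 2 + expMoment γ 2 ^ 2)) * s x
      ≤ shiftMean γ (shiftMean γ a) (x - K) := by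
  have h_pos := h.speed_pos x
  have h_const : 0 ≤ expMoment γ 2 + expMoment γ 2 ^ 2 :=
    add_nonneg (expMoment_nonneg 2) (sq_nonneg _)
  have h_exp_neg : 1 / 2 ≤ Real.exp (-(θ * K)) := by
    linarith [Real.one_sub_le_exp_neg (θ * K)]
  have h_exp : Real.exp (θ * K) ≤ 2 := by
    rw [Real.exp_neg] at h_exp_neg
    have h_inv := (le_inv_comm₀ one_half_pos (Real.exp_pos _)).1 h_exp_neg
    norm_num at h_inv
    exact h_inv
  have h_drift := h.le_sub (x - K) K (by linarith) hK
  rw [sub_add_cancel] at h_drift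
  have h_speed := h.speed_le (x - K) x
  rw [sub_sub_cancel_left, abs_neg, abs_of_nonneg hK] at h_speed
  have h_gain : s x * (1 / 2) * K ≤ s x * Real.exp (-(θ * K)) * K := by gcongr
  have h_speed_two : s (x - K) ≤ s x * 2 := h_speed.trans (by gcongr)
  linarith [h.sub_le_shiftMean_shiftMean hγ hθ (x - K),
    mul_le_mul_of_nonneg_left h_speed_two h_const]

lemma add_le_runMean (h : SlowDrift θ x₁ a s) (hγ : HasExpMoments γ) (hθ : θ ≤ 1) {K x : ℝ}
    (hK : 0 < K) (hθK : θ * K ≤ 1 / 4) (hx : x₁ + K ≤ x) (hKx : 2 * K ≤ x) :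
    a x + (K / 4 - 2 * (expMoment γ 2 + expMoment γ 2 ^ 2)) * s x
      ≤ runMean (shiftMean γ (shiftMean γ a)) x := by
  have h_mean := le_runMean_of_antitone h.bdd.shiftMean.shiftMean
    (shiftMean_antitone h.bdd.shiftMean (shiftMean_antitone h.bdd h.anti)) hK.le
    (by linarith : K ≤ x) (h.add_le_shiftMean_shiftMean_sub hγ hθ hK.le hθK hx)
    (h.sub_le_shiftMean_shiftMean hγ hθ x)
  have hx_pos : 0 < x := by linarith
  have h_pos := h.speed_pos x
  have h_const : 0 ≤ expMoment γ 2 + expMoment γ 2 ^ 2 :=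
    add_nonneg (expMoment_nonneg 2) (sq_nonneg _)
  refine le_of_mul_le_mul_left (le_trans ?_ h_mean) hx_pos
  have h_gain : 0 ≤ (x - 2 * K) * s x * (K / 4) := by
    have : 0 ≤ x - 2 * K := by linarith
    positivity
  have h_loss : 0 ≤ K * s x * (expMoment γ 2 + expMoment γ 2 ^ 2) := by positivity
  linarith

/-- The amount of history needed for the drift of `a` to compensate the smoothing. -/
noncomputable def lag (γ : Measure ℝ) : ℝ := 8 * (1 + 2 * (expMoment γ 2 + expMoment γ 2 ^ 2))

omit [IsProbabilityMeasure γ] in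
lemma eight_le_lag : 8 ≤ lag γ := by
  have h_const := add_nonneg (expMoment_nonneg (γ := γ) 2) (sq_nonneg (expMoment γ 2))
  rw [lag]
  linarith

lemma add_le_mixMean (h : SlowDrift θ x₁ a s) (hγ : HasExpMoments γ) (hθ : θ ≤ 1) {p x : ℝ}
    (hp0 : 0 ≤ p) (hp : p ≤ 1 / 2) (hθK : θ * lag γ ≤ 1 / 4) (hx : x₁ + lag γ ≤ x)
    (hKx : 2 * lag γ ≤ x) :
    a x + s x ≤ mixMean p (shiftMean γ (shiftMean γ a)) x := by
  have h_lag : lag γ = 8 * (1 + 2 * (expMoment γ 2 + expMoment γ 2 ^ 2)) := rfl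
  have h_endpoint := mul_le_mul_of_nonneg_left (h.sub_le_shiftMean_shiftMean hγ hθ x) hp0
  have h_mean := mul_le_mul_of_nonneg_left (h.add_le_runMean hγ hθ
    (by linarith [eight_le_lag (γ := γ)]) hθK hx hKx) (by linarith : 0 ≤ 1 - p)
  have h_const := add_nonneg (expMoment_nonneg (γ := γ) 2) (sq_nonneg (expMoment γ 2))
  rw [mixMean]
  have h_net : s x ≤ (-(p * (expMoment γ 2 + expMoment γ 2 ^ 2))
      + (1 - p) * (lag γ / 4 - 2 * (expMoment γ 2 + expMoment γ 2 ^ 2))) * s x := by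
    refine le_mul_of_one_le_left (h.speed_pos x).le ?_
    rw [h_lag]
    nlinarith
  linarith

end SlowDrift

/-- A solution of equation (E) seen from the upper endpoint `M`: `D = M - F`, `κ = M - φ_F`,
`p = 1 / N`, and `γ` is the centred Gaussian of variance `σ²`. On the negative half-line, where
`φ_F = φ⁻_F`, all that matters is that `κ` stays above a level `e` that `ψ` never exceeds
(namely `e = M - E[V]`). -/
structure Equilibrium (γ : Measure ℝ) (p b L : ℝ) (w ψ D κ : ℝ → ℝ) : Prop
    extends EndpointLaw b L w ψ where
  expMoments : HasExpMoments γ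
  openPos : γ.IsOpenPosMeasure
  p_nonneg : 0 ≤ p
  p_le_half : p ≤ 1 / 2
  measurable_D : Measurable D
  D_mem : ∀ x, D x ∈ Ioo 0 b
  measurable_kappa : Measurable κ
  kappa_mem : ∀ x, κ x ∈ Icc 0 b
  kappa_mul_shiftMean : ∀ x, 0 ≤ x →
    κ x * shiftMean γ (fun y => w (D y)) x = shiftMean γ (fun y => ψ (D y) * w (D y)) x
  exists_level : ∃ e ∈ Ioo 0 b, (∀ d ∈ Ioo 0 b, ψ d ≤ e) ∧ ∀ x < 0, e ≤ κ x
  continuous_shiftMean : Continuous (shiftMean γ κ)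
  D_eq : ∀ x, D x = mixMean p (shiftMean γ κ) x

namespace Equilibrium

variable {γ : Measure ℝ} {p b L : ℝ} {w ψ D κ : ℝ → ℝ}

lemma isBddMeasurable_kappa (h : Equilibrium γ p b L w ψ D κ) : IsBddMeasurable κ :=
  .of_mem_Icc h.measurable_kappa h.kappa_mem

lemma isBddMeasurable_w (h : Equilibrium γ p b L w ψ D κ) : IsBddMeasurable fun x => w (D x) :=
  .of_mem_Icc (h.measurable_w.comp h.measurable_D)
    fun x => ⟨(h.w_pos _ (h.D_mem x)).le, h.w_le_one _ (h.D_mem x)⟩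

lemma psi_mem (h : Equilibrium γ p b L w ψ D κ) (x : ℝ) : ψ (D x) ∈ Icc 0 b :=
  ⟨h.psi_nonneg _ (h.D_mem x), ((h.psi_lt _ (h.D_mem x)).trans (h.D_mem x).2).le⟩

lemma isBddMeasurable_psi (h : Equilibrium γ p b L w ψ D κ) : IsBddMeasurable fun x => ψ (D x) :=
  .of_mem_Icc (h.measurable_psi.comp h.measurable_D) h.psi_mem

lemma p_le_one (h : Equilibrium γ p b L w ψ D κ) : p ≤ 1 := by linarith [h.p_le_half]

variable [IsProbabilityMeasure γ]

lemma shiftMean_kappa_mem (h : Equilibrium γ p b L w ψ D κ) (x : ℝ) :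
    shiftMean γ κ x ∈ Icc 0 b :=
  ⟨const_le_shiftMean h.isBddMeasurable_kappa (fun y => (h.kappa_mem y).1) x,
    shiftMean_le_const h.isBddMeasurable_kappa (fun y => (h.kappa_mem y).2) x⟩

lemma isBddMeasurable_shiftMean_kappa (h : Equilibrium γ p b L w ψ D κ) :
    IsBddMeasurable (shiftMean γ κ) := h.isBddMeasurable_kappa.shiftMean

lemma exists_pos_le_shiftMean_kappa (h : Equilibrium γ p b L w ψ D κ) (X : ℝ) :
    ∃ δ > 0, ∀ x ≤ X, δ ≤ shiftMean γ κ x := by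
  obtain ⟨e, he, -, h_kappa⟩ := h.exists_level
  have h_pos : 0 < γ.real (Iio (-X)) := by
    have := h.openPos
    exact ENNReal.toReal_pos (isOpen_Iio.measure_pos γ ⟨-X - 1, by simp⟩).ne' (measure_ne_top _ _)
  refine ⟨e * γ.real (Iio (-X)), mul_pos he.1 h_pos, fun x hx => ?_⟩
  refine mul_measureReal_le_shiftMean h.isBddMeasurable_kappa (fun y => (h.kappa_mem y).1)
    measurableSet_Iio fun u hu => h_kappa _ ?_
  linarith [mem_Iio.1 hu]

lemma shiftMean_kappa_pos (h : Equilibrium γ p b L w ψ D κ) (x : ℝ) : 0 < shiftMean γ κ x := by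
  obtain ⟨δ, hδ, h_le⟩ := h.exists_pos_le_shiftMean_kappa x
  exact hδ.trans_le (h_le x le_rfl)

lemma exists_pos_le_D (h : Equilibrium γ p b L w ψ D κ) (X : ℝ) : ∃ δ > 0, ∀ x ≤ X, δ ≤ D x := by
  obtain ⟨δ, hδ, h_le⟩ := h.exists_pos_le_shiftMean_kappa (max X 0)
  refine ⟨δ, hδ, fun x hx => ?_⟩
  rw [h.D_eq]
  exact le_mixMean h.p_nonneg h.p_le_one h.isBddMeasurable_shiftMean_kappa fun y hy =>
    h_le y (hy.2.trans (max_comm X 0 ▸ max_le_max le_rfl hx))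

lemma half_mul_runMean_le_D (h : Equilibrium γ p b L w ψ D κ) (x : ℝ) :
    1 / 2 * runMean (shiftMean γ κ) x ≤ D x := by
  have h_mean : 0 ≤ runMean (shiftMean γ κ) x :=
    le_runMean h.isBddMeasurable_shiftMean_kappa fun y _ => (h.shiftMean_kappa_mem y).1
  rw [h.D_eq, mixMean]
  nlinarith [h.p_le_half, mul_nonneg h.p_nonneg (h.shiftMean_kappa_mem x).1]

lemma exists_div_le_runMean (h : Equilibrium γ p b L w ψ D κ) :
    ∃ c > 0, ∀ x ≥ 1, c / x ≤ runMean (shiftMean γ κ) x := by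
  have h_int := h.isBddMeasurable_shiftMean_kappa.intervalIntegrable
  refine ⟨∫ y in (0 : ℝ)..1, shiftMean γ κ y,
    intervalIntegral.intervalIntegral_pos_of_pos (h_int 0 1) h.shiftMean_kappa_pos one_pos,
    fun x hx => ?_⟩
  have h_tail : 0 ≤ ∫ y in (1 : ℝ)..x, shiftMean γ κ y :=
    intervalIntegral.integral_nonneg hx fun y _ => (h.shiftMean_kappa_mem y).1
  rw [div_le_iff₀' (zero_lt_one.trans_le hx), mul_runMean,
    ← intervalIntegral.integral_add_adjacent_intervals (h_int 0 1) (h_int 1 x)]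
  exact le_add_of_nonneg_right h_tail

lemma exists_div_le_D (h : Equilibrium γ p b L w ψ D κ) : ∃ c > 0, ∀ x ≥ 1, c / x ≤ D x := by
  obtain ⟨c, hc, h_le⟩ := h.exists_div_le_runMean
  refine ⟨c / 2, half_pos hc, fun x hx => le_trans ?_ (h.half_mul_runMean_le_D x)⟩
  linarith [h_le x hx, div_right_comm c 2 x]

-- `ψ ∘ D` and `w ∘ D` are both increasing functions of `D`, hence positively correlated.
lemma shiftMean_psi_le_kappa (h : Equilibrium γ p b L w ψ D κ) (x : ℝ) :
    shiftMean γ (fun y => ψ (D y)) x ≤ κ x := by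
  rcases lt_or_ge x 0 with hx | hx
  · obtain ⟨e, -, h_psi, h_kappa⟩ := h.exists_level
    exact (shiftMean_le_const h.isBddMeasurable_psi (fun y => h_psi _ (h.D_mem y)) x).trans
      (h_kappa x hx)
  · refine le_of_mul_le_mul_right ?_
      (shiftMean_pos (γ := γ) h.isBddMeasurable_w (fun y => h.w_pos _ (h.D_mem y)) x)
    rw [h.kappa_mul_shiftMean x hx]
    refine shiftMean_mul_shiftMean_le_of_monovary h.isBddMeasurable_psi h.isBddMeasurable_w
      (fun s t hst => ?_) x
    have h_lt : D s < D t := h.w_mono.reflect_lt (h.D_mem s) (h.D_mem t) hst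
    exact h.psi_mono (h.D_mem s) (h.D_mem t) h_lt.le

lemma mixMean_shiftMean_psi_le_D (h : Equilibrium γ p b L w ψ D κ) (x : ℝ) :
    mixMean p (shiftMean γ (shiftMean γ fun y => ψ (D y))) x ≤ D x := by
  have h_bdd := h.isBddMeasurable_psi.shiftMean (γ := γ)
  rw [h.D_eq]
  exact mixMean_mono h.p_nonneg h.p_le_one h_bdd.shiftMean h.isBddMeasurable_shiftMean_kappa
    fun y => shiftMean_mono h_bdd h.isBddMeasurable_kappa h.shiftMean_psi_le_kappa y

end Equilibrium

lemma EndpointLaw.psi_sub_psi_le {b L δ ε d₁ d₂ : ℝ} {w ψ : ℝ → ℝ} (h : EndpointLaw b L w ψ)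
    (hδ : δ < b) (h_deriv : ∀ d ∈ Ioc 0 δ, |deriv ψ d - 1| ≤ ε) (h₁ : 0 < d₁) (h₁₂ : d₁ ≤ d₂)
    (h₂ : d₂ ≤ δ) : ψ d₂ - ψ d₁ ≤ (1 + ε) * (d₂ - d₁) := by
  refine (le_abs_self _).trans (abs_sub_le_of_abs_deriv_le (g := id) (g' := fun _ => 1) h₁₂
    (fun t ht => (h.differentiableAt_psi t
      ⟨h₁.trans_le ht.1, (ht.2.trans h₂).trans_lt hδ⟩).hasDerivAt)
    (fun t _ => hasDerivAt_id t) fun t ht => ?_)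
  have h_near := h_deriv t ⟨h₁.trans_le ht.1, ht.2.trans h₂⟩
  have h_abs := abs_add_le (deriv ψ t - 1) 1
  rw [sub_add_cancel, abs_one] at h_abs
  linarith

namespace Equilibrium

variable {γ : Measure ℝ} [IsProbabilityMeasure γ] {p b L : ℝ} {w ψ D κ : ℝ → ℝ}

section Comparison

variable {δ x₂ : ℝ} {β : ℝ → ℝ}

omit [IsProbabilityMeasure γ] in
lemma psi_sub_psi_D_le_posPart (h : Equilibrium γ p b L w ψ D κ) (hδ : δ < b)
    (h_deriv : ∀ d ∈ Ioc 0 δ, |deriv ψ d - 1| ≤ 1 / 8) (hβ : ∀ x, β x ∈ Ioc 0 δ) {E : ℝ}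
    (hE : 0 ≤ E) (h_le : ∀ z, β z ≤ D z + E * max z 0) (z : ℝ) :
    ψ (β z) ≤ ψ (D z) + 9 / 8 * E * max z 0 := by
  have h_pos : 0 ≤ E * max z 0 := mul_nonneg hE (le_max_right z 0)
  rcases le_total (β z) (D z) with h_cmp | h_cmp
  · linarith [h.psi_mono ⟨(hβ z).1, (hβ z).2.trans_lt hδ⟩ (h.D_mem z) h_cmp]
  · linarith [h.psi_sub_psi_le hδ h_deriv (h.D_mem z).1 h_cmp (hβ z).2, h_le z]

-- Since `p ≤ 1 / 2`, the operator `mixMean p` multiplies a linear function by at most `3 / 4`.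
lemma le_D_add_contract (h : Equilibrium γ p b L w ψ D κ) (hδ : δ < b)
    (h_deriv : ∀ d ∈ Ioc 0 δ, |deriv ψ d - 1| ≤ 1 / 8) (hβ : ∀ x, β x ∈ Ioc 0 δ)
    (hβ_meas : IsBddMeasurable fun x => ψ (β x)) (hx₂ : 64 * expMoment γ 2 ≤ x₂)
    (h_start : ∀ x ≤ x₂, β x ≤ D x)
    (h_sub : ∀ x ≥ x₂, β x ≤ mixMean p (shiftMean γ (shiftMean γ fun y => ψ (β y))) x) {E : ℝ}
    (hE : 0 ≤ E) (h_le : ∀ z, β z ≤ D z + E * max z 0) (z : ℝ) :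
    β z ≤ D z + 225 / 256 * E * max z 0 := by
  rcases le_total z x₂ with hz | hz
  · have h_pos : 0 ≤ E * max z 0 := mul_nonneg hE (le_max_right z 0)
    linarith [h_start z hz]
  set c := expMoment γ 2
  have hc : 0 ≤ c := expMoment_nonneg 2
  have hz0 : 0 ≤ z := by linarith
  have h_D := h.isBddMeasurable_psi
  have h_outer := shiftMean_shiftMean_le_of_le_add_posPart h.expMoments hβ_meas h_D
    (a := 9 / 8 * E) (by positivity) (h.psi_sub_psi_D_le_posPart hδ h_deriv hβ hE h_le)
  have h_mean := runMean_le_add_affine (x := z) (α := 9 / 8 * E) (β := 9 / 8 * E * (2 * c))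
    hβ_meas.shiftMean.shiftMean h_D.shiftMean.shiftMean fun y hy => by
      rw [uIcc_of_le hz0] at hy
      refine (h_outer y).trans_eq ?_
      rw [max_eq_left hy.1, mul_add]
  have h_end := h_outer z
  rw [max_eq_left hz0] at h_end ⊢
  have h_mix := add_le_add (mul_le_mul_of_nonneg_left h_end h.p_nonneg)
    (mul_le_mul_of_nonneg_left h_mean (sub_nonneg.2 h.p_le_one))
  have h_coeff : p * (z + 2 * c) + (1 - p) * (z / 2 + 2 * c) ≤ 25 / 32 * z := by
    nlinarith [h.p_le_half]
  have h_gain := mul_le_mul_of_nonneg_left h_coeff (by positivity : 0 ≤ 9 / 8 * E)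
  have h_sub_z := h_sub z hz
  have h_D_z := h.mixMean_shiftMean_psi_le_D z
  rw [mixMean] at h_sub_z h_D_z
  linarith

lemma le_D_of_le_mixMean (h : Equilibrium γ p b L w ψ D κ) (hδ : δ < b)
    (h_deriv : ∀ d ∈ Ioc 0 δ, |deriv ψ d - 1| ≤ 1 / 8) (hβ : ∀ x, β x ∈ Ioc 0 δ)
    (hβ_meas : IsBddMeasurable fun x => ψ (β x)) (hx₂ : 64 * expMoment γ 2 ≤ x₂)
    (hx₂_pos : 0 < x₂) (h_start : ∀ x ≤ x₂, β x ≤ D x)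
    (h_sub : ∀ x ≥ x₂, β x ≤ mixMean p (shiftMean γ (shiftMean γ fun y => ψ (β y))) x) (x : ℝ) :
    β x ≤ D x := by
  have hδ_pos : 0 < δ := (hβ 0).1.trans_le (hβ 0).2
  have h_iter (n : ℕ) : ∀ z, β z ≤ D z + (225 / 256) ^ n * (δ / x₂) * max z 0 := by
    induction n with
    | zero =>
      intro z
      rcases le_total z x₂ with hz | hz
      · exact (h_start z hz).trans (le_add_of_nonneg_right (by positivity))
      · have h_ratio : δ ≤ δ / x₂ * z := by
          rw [div_mul_eq_mul_div, le_div_iff₀ hx₂_pos]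
          exact mul_le_mul_of_nonneg_left hz hδ_pos.le
        rw [max_eq_left (hx₂_pos.le.trans hz), pow_zero, one_mul]
        linarith [(hβ z).2, (h.D_mem z).1]
    | succ n ih =>
      intro z
      refine (h.le_D_add_contract hδ h_deriv hβ hβ_meas hx₂ h_start h_sub (by positivity) ih
        z).trans_eq ?_
      ring
  have h_lim : Tendsto (fun n : ℕ => D x + (225 / 256) ^ n * (δ / x₂) * max x 0) atTop
      (nhds (D x + 0 * (δ / x₂) * max x 0)) :=
    (((tendsto_pow_atTop_nhds_zero_of_lt_one (by norm_num) (by norm_num)).mul_const _).mul_const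
      _).const_add _
  simpa using ge_of_tendsto' h_lim fun n => h_iter n x

end Comparison

/-- The survival probability along the solution decays at most exponentially; this makes `κ x`
depend, up to an exponentially small error, only on the values of `D` near `x`. -/
def DecaysAtMostExp (w D : ℝ → ℝ) : Prop :=
  ∃ c > 0, ∃ C ≥ 0, ∀ x ≥ 1, c * Real.exp (-(C * x)) ≤ w (D x)

lemma decaysAtMostExp_of_lt_one (h : Equilibrium γ p b L w ψ D κ) (hL : L < 1) :
    DecaysAtMostExp w D := by
  obtain ⟨δ, hδ, h_log⟩ := h.abs_log_w_sub_le hL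
  obtain ⟨c, hc, hD⟩ := h.exists_div_le_D
  have hL' : 0 < 1 - L := sub_pos.2 hL
  have hδ0 := hδ.1
  have hwδ := h.w_pos δ hδ
  refine ⟨w δ, hwδ, 2 / (1 - L) * (δ / c), by positivity, fun x hx => ?_⟩
  have hx0 : 0 < x := by linarith
  have hDx := h.D_mem x
  rcases le_total δ (D x) with h_cmp | h_cmp
  · have h_exp : Real.exp (-(2 / (1 - L) * (δ / c) * x)) ≤ 1 :=
      Real.exp_le_one_iff.2 (neg_nonpos.2 (by positivity))
    exact (mul_le_of_le_one_right hwδ.le h_exp).trans (h.w_mono hδ hDx h_cmp)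
  · have h_log_ratio : Real.log δ - Real.log (D x) ≤ δ / c * x := by
      rw [← Real.log_div hδ0.ne' hDx.1.ne']
      calc Real.log (δ / D x) ≤ δ / D x := Real.log_le_self (div_pos hδ0 hDx.1).le
        _ ≤ δ / (c / x) := div_le_div_of_nonneg_left hδ0.le (by positivity) (hD x hx)
        _ = δ / c * x := by field_simp
    have h_drop := (le_abs_self _).trans (h_log (D x) ⟨hDx.1, h_cmp⟩)
    rw [← Real.log_le_log_iff (by positivity) (h.w_pos _ hDx),
      Real.log_mul hwδ.ne' (Real.exp_pos _).ne', Real.log_exp, mul_assoc]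
    linarith [mul_le_mul_of_nonneg_left h_log_ratio (by positivity : 0 ≤ 2 / (1 - L))]

lemma decaysAtMostExp_of_eq_one (h : Equilibrium γ p b 1 w ψ D κ)
    (hw : ∀ c > 0, ∃ d ∈ Ioo 0 b, w d < c) : DecaysAtMostExp w D := by
  set c := expMoment γ 2
  have hc : 0 ≤ c := expMoment_nonneg 2
  have hK : 8 ≤ SlowDrift.lag γ := SlowDrift.eight_le_lag
  set K := SlowDrift.lag γ
  set ε := 1 / (8 * K)
  set x₁ := K + 64 * c
  have hε0 : 0 < ε := by positivity
  have hε : ε ≤ 1 / 64 := one_div_le_one_div_of_le (by norm_num) (by linarith)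
  obtain ⟨δ₀, hδ₀, hD⟩ := h.exists_pos_le_D (x₁ + K)
  obtain ⟨δ, hδ, hδδ₀, h_deriv⟩ := h.exists_deriv_near hε0 hδ₀
  choose β hβ h_log using fun x : ℝ =>
    h.exists_log_w_eq_sub hw hδ (le_max_right (x - x₁) 0)
  have h_drift : SlowDrift (2 * ε) x₁ (fun x => ψ (β x)) fun x => β x - ψ (β x) :=
    h.slowDrift hδ.2 hε0.le (by linarith) h_deriv hβ h_log
  have h_speed : 2 * ε * K ≤ 1 / 4 := by simp only [ε]; field_simp; norm_num
  have h_le_D : ∀ x, β x ≤ D x := by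
    refine h.le_D_of_le_mixMean (x₂ := x₁ + K) hδ.2
      (fun d hd => (h_deriv d hd).trans (by linarith)) hβ h_drift.bdd (by linarith) (by linarith)
      (fun x hx => (hβ x).2.trans (hδδ₀.trans (hD x hx))) fun x hx => ?_
    have h_step := h_drift.add_le_mixMean h.expMoments (by linarith) h.p_nonneg h.p_le_half
      h_speed hx (by linarith)
    simpa only [add_sub_cancel] using h_step
  refine ⟨w δ, h.w_pos δ hδ, 1, zero_le_one, fun x hx => ?_⟩
  have hβx : β x ∈ Ioo 0 b := ⟨(hβ x).1, (hβ x).2.trans_lt hδ.2⟩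
  refine le_trans ?_ (h.w_mono hβx (h.D_mem x) (h_le_D x))
  rw [← Real.log_le_log_iff (mul_pos (h.w_pos δ hδ) (Real.exp_pos _)) (h.w_pos _ hβx),
    Real.log_mul (h.w_pos δ hδ).ne' (Real.exp_pos _).ne', Real.log_exp, h_log]
  linarith [max_le (by linarith : x - x₁ ≤ x) (by linarith : 0 ≤ x)]

theorem decaysAtMostExp (h : Equilibrium γ p b L w ψ D κ) : DecaysAtMostExp w D := by
  rcases h.L_le_one.lt_or_eq with hL | rfl
  · exact h.decaysAtMostExp_of_lt_one hL
  · by_cases hw : ∀ c > 0, ∃ d ∈ Ioo 0 b, w d < c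
    · exact h.decaysAtMostExp_of_eq_one hw
    · push Not at hw
      obtain ⟨c, hc, hw⟩ := hw
      exact ⟨c, hc, 0, le_rfl, fun x _ => by simpa using hw _ (h.D_mem x)⟩

lemma shiftMean_psi_mul_w_le_of_window (h : Equilibrium γ p b L w ψ D κ) {l r S x : ℝ}
    (hl : 0 ≤ l) (hS : 0 ≤ S) (h_window : ∀ z, |z - x| ≤ r → ψ (D z) ≤ S) :
    shiftMean γ (fun y => ψ (D y) * w (D y)) x
      ≤ S * shiftMean γ (fun y => w (D y)) x + b * expMoment γ l * Real.exp (-(l * r)) := by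
  have hb := h.b_pos.le
  have h_w (y : ℝ) : w (D y) ∈ Icc 0 1 := ⟨(h.w_pos _ (h.D_mem y)).le, h.w_le_one _ (h.D_mem y)⟩
  have h_S : IsBddMeasurable fun y => S * w (D y) :=
    (IsBddMeasurable.const S).mul h.isBddMeasurable_w
  have h_psi_w := h.isBddMeasurable_psi.mul h.isBddMeasurable_w
  have h_excess : shiftMean γ (fun y => ψ (D y) * w (D y) - S * w (D y)) x
      ≤ 0 + b * expMoment γ l * Real.exp (-(l * r)) := by
    refine shiftMean_le_of_le_on_window h.expMoments (h_psi_w.sub h_S) (fun y => ?_) hb hl le_rfl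
      fun z hz => sub_nonpos.2 (mul_le_mul_of_nonneg_right (h_window z hz) (h_w z).1)
    nlinarith [mul_nonneg hS (h_w y).1, mul_le_mul (h.psi_mem y).2 (h_w y).2 (h_w y).1 hb]
  rw [shiftMean_sub h_psi_w h_S, shiftMean, shiftMean, integral_const_mul] at h_excess
  simp only [shiftMean]
  linarith

lemma exists_mul_exp_le_shiftMean_w (h : Equilibrium γ p b L w ψ D κ) :
    ∃ c > 0, ∃ C ≥ 0, ∀ x ≥ 2, c * Real.exp (-(C * x)) ≤ shiftMean γ (fun y => w (D y)) x := by
  obtain ⟨c, hc, C, hC, h_decay⟩ := h.decaysAtMostExp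
  have h_mass : 0 < γ.real (Ioo (-1) 1) := by
    have := h.openPos
    exact ENNReal.toReal_pos (isOpen_Ioo.measure_pos γ ⟨0, by simp⟩).ne' (measure_ne_top _ _)
  refine ⟨c * Real.exp (-C) * γ.real (Ioo (-1) 1), by positivity, C, hC, fun x hx => ?_⟩
  rw [mul_right_comm, mul_assoc c, ← Real.exp_add]
  refine mul_measureReal_le_shiftMean h.isBddMeasurable_w
    (fun y => (h.w_pos _ (h.D_mem y)).le) measurableSet_Ioo fun u hu => ?_
  refine le_trans (mul_le_mul_of_nonneg_left (Real.exp_le_exp.2 ?_) hc.le)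
    (h_decay (x + u) (by linarith [hu.1]))
  nlinarith [hu.2]

-- The Gaussian mass outside the window beats the lower bound on `w ∘ D`.
lemma exists_kappa_le_add_exp (h : Equilibrium γ p b L w ψ D κ) {ε : ℝ} (hε : 0 < ε) :
    ∃ C ≥ 0, ∀ x ≥ 2, ∀ S ≥ 0, (∀ z, |z - x| ≤ ε * x → ψ (D z) ≤ S) →
      κ x ≤ S + C * Real.exp (-x) := by
  obtain ⟨c, hc, C, hC, h_decay⟩ := h.exists_mul_exp_le_shiftMean_w
  set l := (C + 1) / ε
  have hl : 0 ≤ l := by positivity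
  have hb := h.b_pos
  have hE : 0 ≤ expMoment γ l := expMoment_nonneg l
  refine ⟨b * expMoment γ l / c, by positivity, fun x hx S hS h_window => ?_⟩
  have h_rate : Real.exp (-(l * (ε * x))) = Real.exp (-(C * x)) * Real.exp (-x) := by
    rw [← Real.exp_add]
    congr 1
    simp only [l]
    field_simp
    ring
  have h_tail : b * expMoment γ l * Real.exp (-(l * (ε * x)))
      ≤ b * expMoment γ l / c * Real.exp (-x) * shiftMean γ (fun y => w (D y)) x := by
    rw [h_rate]
    calc b * expMoment γ l * (Real.exp (-(C * x)) * Real.exp (-x))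
        = b * expMoment γ l / c * Real.exp (-x) * (c * Real.exp (-(C * x))) := by field_simp
      _ ≤ _ := mul_le_mul_of_nonneg_left (h_decay x hx) (by positivity)
  refine le_of_mul_le_mul_right ?_
    (shiftMean_pos (γ := γ) h.isBddMeasurable_w (fun y => h.w_pos _ (h.D_mem y)) x)
  rw [h.kappa_mul_shiftMean x (by linarith), add_mul]
  linarith [h.shiftMean_psi_mul_w_le_of_window hl hS h_window]

lemma exists_shiftMean_kappa_le_add_exp (h : Equilibrium γ p b L w ψ D κ) {ε : ℝ} (hε : 0 < ε)
    (hε1 : ε < 1) :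
    ∃ C ≥ 0, ∀ x ≥ 4, ∀ S ≥ 0, (∀ z, |z - x| ≤ ε * x → ψ (D z) ≤ S) →
      shiftMean γ κ x ≤ S + C * Real.exp (-(x / 2)) := by
  obtain ⟨C, hC, h_kappa⟩ := h.exists_kappa_le_add_exp (ε := ε / 3) (by positivity)
  set l := 3 / (2 * ε)
  have hb := h.b_pos
  have hE : 0 ≤ expMoment γ l := expMoment_nonneg l
  refine ⟨C + b * expMoment γ l, by positivity, fun x hx S hS h_window => ?_⟩
  have h_near (y : ℝ) (hy : |y - x| ≤ ε / 3 * x) : κ y ≤ S + C * Real.exp (-(x / 2)) := by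
    rw [abs_le] at hy
    have hy_lower : x * (2 / 3) ≤ y := by nlinarith
    have hy_upper : y ≤ x * (4 / 3) := by nlinarith
    refine (h_kappa y (by linarith) S hS fun z hz => h_window z ?_).trans ?_
    · rw [abs_le] at hz ⊢
      have := mul_le_mul_of_nonneg_left hy_upper hε.le
      have := mul_nonneg hε.le (by linarith : 0 ≤ x)
      constructor <;> linarith
    · gcongr
      linarith
  have h_mean := shiftMean_le_of_le_on_window (l := l) h.expMoments h.isBddMeasurable_kappa
    (fun y => (h.kappa_mem y).2) hb.le (by positivity) (by positivity) h_near
  rw [show l * (ε / 3 * x) = x / 2 by simp only [l]; field_simp] at h_mean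
  linarith

lemma exists_sub_exp_le_shiftMean_kappa (h : Equilibrium γ p b L w ψ D κ) {ε : ℝ} (hε : 0 < ε) :
    ∃ C ≥ 0, ∀ x, ∀ S ≤ b, (∀ z, |z - x| ≤ ε * x → S ≤ ψ (D z)) →
      S - C * Real.exp (-(x / 2)) ≤ shiftMean γ κ x := by
  set l := 1 / ε
  have hb := h.b_pos.le
  have hl : 0 ≤ l := by positivity
  have hE : 0 ≤ expMoment γ l := expMoment_nonneg l
  refine ⟨b * expMoment γ l + b * expMoment γ l, by positivity, fun x S hS h_window => ?_⟩
  have h_rate : l * (ε / 2 * x) = x / 2 := by simp only [l]; field_simp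
  have h_tail : 0 ≤ b * expMoment γ l * Real.exp (-(x / 2)) := by positivity
  have h_kappa (y : ℝ) (hy : |y - x| ≤ ε / 2 * x) :
      S - b * expMoment γ l * Real.exp (-(x / 2)) ≤ κ y := by
    rw [← h_rate]
    refine (le_shiftMean_of_le_on_window h.expMoments h.isBddMeasurable_psi
      (fun z => (h.psi_mem z).1) hl hb hS fun z hz => h_window z ?_).trans
      (h.shiftMean_psi_le_kappa y)
    linarith [abs_sub_le z y x]
  have h_mean := le_shiftMean_of_le_on_window h.expMoments h.isBddMeasurable_kappa
    (fun z => (h.kappa_mem z).1) hl hb (by linarith) h_kappa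
  rw [h_rate] at h_mean
  linarith

end Equilibrium

lemma eventually_mul_exp_neg_half_le (C : ℝ) {η : ℝ} (hη : 0 < η) :
    ∀ᶠ x : ℝ in atTop, C * Real.exp (-(x / 2)) ≤ η := by
  have h_lim : Tendsto (fun x : ℝ => C * Real.exp (-(x / 2))) atTop (nhds (C * 0)) :=
    (Real.tendsto_exp_neg_atTop_nhds_zero.comp
      (tendsto_id.atTop_div_const zero_lt_two)).const_mul C
  rw [mul_zero] at h_lim
  exact (h_lim.eventually_lt_const hη).mono fun x hx => hx.le

namespace Equilibrium

variable {γ : Measure ℝ} [IsProbabilityMeasure γ] {p b L : ℝ} {w ψ D κ : ℝ → ℝ}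

lemma eventually_D_le_add (h : Equilibrium γ p b L w ψ D κ) {S η : ℝ} (hS : 0 ≤ S)
    (h_psi : ∀ᶠ z in atTop, ψ (D z) ≤ S) (hη : 0 < η) : ∀ᶠ x in atTop, D x ≤ S + η := by
  obtain ⟨C, -, h_mean⟩ := h.exists_shiftMean_kappa_le_add_exp (ε := 1 / 2) (by norm_num)
    (by norm_num)
  obtain ⟨X, hX⟩ := eventually_atTop.1 h_psi
  have h_k : ∀ᶠ x in atTop, shiftMean γ κ x ≤ S + η / 2 := by
    filter_upwards [eventually_mul_exp_neg_half_le C (half_pos hη), eventually_ge_atTop 4,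
      eventually_ge_atTop (2 * X)] with x hx_exp hx4 hxX
    refine (h_mean x hx4 S hS fun z hz => hX z ?_).trans (by linarith)
    linarith [(abs_le.1 hz).1]
  filter_upwards [h_k, eventually_runMean_le h.isBddMeasurable_shiftMean_kappa (half_pos hη) h_k]
    with x hx_end hx_mean
  rw [h.D_eq, mixMean]
  linarith [mul_le_mul_of_nonneg_left hx_end h.p_nonneg, mul_nonneg h.p_nonneg hη.le,
    mul_le_mul_of_nonneg_left hx_mean (sub_nonneg.2 h.p_le_one)]

-- A positive limit superior `s` would satisfy `s ≤ ψ s < s`.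
theorem tendsto_D (h : Equilibrium γ p b L w ψ D κ) : Tendsto D atTop (nhds 0) := by
  have h_bdd : IsBoundedUnder (· ≤ ·) atTop D := isBoundedUnder_of ⟨b, fun x => (h.D_mem x).2.le⟩
  have h_cobdd : IsCoboundedUnder (· ≤ ·) atTop D :=
    (isBoundedUnder_of ⟨0, fun x => (h.D_mem x).1.le⟩ :
      IsBoundedUnder (· ≥ ·) atTop D).isCoboundedUnder_le
  obtain ⟨e, he, h_psi, -⟩ := h.exists_level
  have h_lt : limsup D atTop < b := by
    have h_le := limsup_le_of_le h_cobdd (h.eventually_D_le_add (η := (b - e) / 2) he.1.le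
      (.of_forall fun z => h_psi _ (h.D_mem z)) (by linarith [he.2]))
    linarith [he.2]
  have h_nonpos : limsup D atTop ≤ 0 := by
    by_contra! h_pos
    set s := limsup D atTop
    have hs : s ∈ Ioo 0 b := ⟨h_pos, h_lt⟩
    have h_right : ∀ᶠ t in nhdsWithin s (Ioi s), ψ t < (ψ s + s) / 2 :=
      ((h.differentiableAt_psi s hs).continuousAt.eventually_lt_const
        (by linarith [h.psi_lt s hs])).filter_mono nhdsWithin_le_nhds
    obtain ⟨t, ht_psi, ht⟩ := (h_right.and (Ioo_mem_nhdsGT h_lt)).exists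
    have ht_mem : t ∈ Ioo 0 b := ⟨h_pos.trans ht.1, ht.2⟩
    have h_step := h.eventually_D_le_add (η := (s - ψ s) / 4) (h.psi_nonneg t ht_mem)
      ((eventually_lt_of_limsup_lt ht.1 h_bdd).mono fun x hx =>
        h.psi_mono (h.D_mem x) ht_mem hx.le) (by linarith [h.psi_lt s hs])
    linarith [limsup_le_of_le h_cobdd h_step, h.psi_lt s hs]
  refine tendsto_order.2 ⟨fun a ha => .of_forall fun x => ha.trans (h.D_mem x).1, fun a ha => ?_⟩
  exact eventually_lt_of_limsup_lt (h_nonpos.trans_lt ha) h_bdd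

end Equilibrium

section RatioWeight

variable {p x z : ℝ} {k : ℝ → ℝ}

/-- A weight with minimum `1` at `z = x`, used to compare a function and its running mean at `z`
with the running mean at `x`. It must dominate `x / z`, since a running mean may decay that fast,
and its integral over `[x, z]` must cost a factor below `1 / 2`, which the square achieves. -/
noncomputable def ratioWeight (x z : ℝ) : ℝ := max (x / z) ((z / x) ^ 2)

lemma ratioWeight_self (hx : 0 < x) : ratioWeight x x = 1 := by
  simp [ratioWeight, div_self hx.ne']

lemma one_le_ratioWeight (hx : 0 < x) (hz : 0 < z) : 1 ≤ ratioWeight x z := by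
  rcases le_total x z with h | h
  · exact le_max_of_le_right (one_le_pow₀ ((one_le_div hx).2 h))
  · exact le_max_of_le_left ((one_le_div hz).2 h)

lemma ratioWeight_le_of_window (hx : 0 < x) (hz : 0 < z) {y : ℝ} (h : |y - z| ≤ 1 / 20 * z) :
    ratioWeight x y ≤ 10 / 9 * ratioWeight x z := by
  rw [abs_le] at h
  have hy : 0 < y := by linarith
  refine max_le ?_ ?_
  · refine le_trans ?_ (mul_le_mul_of_nonneg_left (le_max_left (x / z) _) (by norm_num))
    rw [← mul_div_assoc, div_le_div_iff₀ hy hz]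
    nlinarith
  · refine le_trans ?_ (mul_le_mul_of_nonneg_left (le_max_right (x / z) _) (by norm_num))
    rw [div_pow, div_pow, ← mul_div_assoc]
    gcongr
    nlinarith

lemma intervalIntegral_le_of_le_ratioWeight (hk : IsBddMeasurable k) {Q : ℝ} (hQ : 0 ≤ Q)
    (hx : 0 < x) (hxz : x ≤ z) (h : ∀ y > 0, k y ≤ Q * ratioWeight x y) :
    ∫ y in x..z, k y ≤ z * ((z / x) ^ 2 * (Q / 3)) := by
  have hz := hx.trans_le hxz
  have h_int : ∫ y in x..z, k y ≤ ∫ y in x..z, Q / x ^ 2 * y ^ 2 := by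
    refine intervalIntegral.integral_mono_on hxz (hk.intervalIntegrable x z)
      (Continuous.intervalIntegrable (by fun_prop) x z) fun y hy => ?_
    have hy0 : 0 < y := hx.trans_le hy.1
    have h_right : ratioWeight x y = (y / x) ^ 2 := max_eq_right
      (((div_le_one hy0).2 hy.1).trans (one_le_pow₀ ((one_le_div hx).2 hy.1)))
    refine (h y hy0).trans_eq ?_
    rw [h_right]
    ring
  have h_cube : ∫ y in x..z, Q / x ^ 2 * y ^ 2 ≤ z * ((z / x) ^ 2 * (Q / 3)) := by
    rw [intervalIntegral.integral_const_mul, integral_pow]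
    calc Q / x ^ 2 * ((z ^ (2 + 1) - x ^ (2 + 1)) / ((2 : ℕ) + 1))
        ≤ Q / x ^ 2 * (z ^ (2 + 1) / ((2 : ℕ) + 1)) := by
          gcongr
          exact sub_le_self _ (by positivity)
      _ = z * ((z / x) ^ 2 * (Q / 3)) := by
          push_cast
          ring
  exact h_int.trans h_cube

lemma runMean_le_ratioWeight_mul (hk : IsBddMeasurable k) (hk0 : ∀ y, 0 ≤ k y) {Q : ℝ} (hQ : 0 ≤ Q)
    (hx : 0 < x) (h : ∀ y > 0, k y ≤ Q * ratioWeight x y) (hz : 0 < z) :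
    runMean k z ≤ ratioWeight x z * (runMean k x + Q / 3) := by
  have h_mean : 0 ≤ runMean k x := le_runMean hk fun y _ => hk0 y
  have h_split : z * runMean k z = x * runMean k x + ∫ y in x..z, k y := by
    rw [mul_runMean, mul_runMean, intervalIntegral.integral_add_adjacent_intervals
      (hk.intervalIntegrable 0 x) (hk.intervalIntegrable x z)]
  have h_one := one_le_ratioWeight hx hz
  refine le_of_mul_le_mul_left ?_ hz
  rcases le_total z x with hzx | hxz
  · have h_int : ∫ y in x..z, k y ≤ 0 := by
      rw [intervalIntegral.integral_symm, neg_nonpos]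
      exact intervalIntegral.integral_nonneg hzx fun y _ => hk0 y
    calc z * runMean k z ≤ z * (x / z * runMean k x) := by
          rw [← mul_assoc, mul_div_cancel₀ x hz.ne']
          linarith
      _ ≤ z * (ratioWeight x z * (runMean k x + Q / 3)) := by
          gcongr
          · exact le_max_left _ _
          · linarith
  · have h_int := intervalIntegral_le_of_le_ratioWeight hk hQ hx hxz h
    calc z * runMean k z ≤ z * (1 * runMean k x) + z * ((z / x) ^ 2 * (Q / 3)) := by
          rw [h_split, one_mul]
          linarith [mul_le_mul_of_nonneg_right hxz h_mean]
      _ ≤ z * (ratioWeight x z * runMean k x) + z * (ratioWeight x z * (Q / 3)) := by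
          gcongr
          exact le_max_right _ _
      _ = z * (ratioWeight x z * (runMean k x + Q / 3)) := by ring

lemma mixMean_le_ratioWeight_mul (hk : IsBddMeasurable k) (hk0 : ∀ y, 0 ≤ k y) {Q : ℝ} (hQ : 0 ≤ Q)
    (hp0 : 0 ≤ p) (hp : p ≤ 1 / 2) (hx : 0 < x) (h : ∀ y > 0, k y ≤ Q * ratioWeight x y)
    (hz : 0 < z) : mixMean p k z ≤ ratioWeight x z * (runMean k x + 2 / 3 * Q) := by
  have h_mean : 0 ≤ runMean k x := le_runMean hk fun y _ => hk0 y
  have h_one := one_le_ratioWeight hx hz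
  calc mixMean p k z
      ≤ p * (Q * ratioWeight x z) + (1 - p) * (ratioWeight x z * (runMean k x + Q / 3)) :=
        add_le_add (mul_le_mul_of_nonneg_left (h z hz) hp0)
          (mul_le_mul_of_nonneg_left (runMean_le_ratioWeight_mul hk hk0 hQ hx h hz) (by linarith))
    _ = ratioWeight x z * (p * Q + (1 - p) * (runMean k x + Q / 3)) := by ring
    _ ≤ ratioWeight x z * (runMean k x + 2 / 3 * Q) :=
        mul_le_mul_of_nonneg_left
          (by linarith [mul_nonneg hp0 h_mean, mul_le_mul_of_nonneg_right hp hQ]) (by linarith)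

end RatioWeight

namespace Equilibrium

variable {γ : Measure ℝ} [IsProbabilityMeasure γ] {p b L : ℝ} {w ψ D κ : ℝ → ℝ}

lemma runMean_pos (h : Equilibrium γ p b L w ψ D κ) {x : ℝ} (hx : 1 ≤ x) :
    0 < runMean (shiftMean γ κ) x := by
  obtain ⟨c, hc, h_le⟩ := h.exists_div_le_runMean
  exact (div_pos hc (by linarith)).trans_le (h_le x hx)

lemma exists_shiftMean_kappa_le_ratioWeight_mul (h : Equilibrium γ p b L w ψ D κ) :
    ∃ A ≥ 0, ∀ x ≥ 1, ∀ Q ≥ 0, (∀ z > 0, shiftMean γ κ z ≤ Q * ratioWeight x z) →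
      ∀ z > 0, shiftMean γ κ z
        ≤ (20 / 27 * Q + A * runMean (shiftMean γ κ) x) * ratioWeight x z := by
  obtain ⟨C, hC, h_mean⟩ := h.exists_shiftMean_kappa_le_add_exp (ε := 1 / 20) (by norm_num)
    (by norm_num)
  obtain ⟨c, hc, h_div⟩ := h.exists_div_le_runMean
  have hb := h.b_pos
  refine ⟨10 / 9 + 2 * C / c + 4 * b / c, by positivity, fun x hx Q hQ hkQ z hz => ?_⟩
  have hx0 : 0 < x := by linarith
  have h_pos := h.runMean_pos hx
  set G := runMean (shiftMean γ κ) x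
  have h_one := one_le_ratioWeight hx0 hz
  have h_inv : 1 / z ≤ 1 / c * (G * ratioWeight x z) := by
    calc 1 / z = 1 / c * (c / x * (x / z)) := by field_simp
      _ ≤ 1 / c * (G * ratioWeight x z) := by
          gcongr
          · exact h_div x hx
          · exact le_max_left _ _
  suffices h_sum : shiftMean γ κ z
      ≤ 10 / 9 * ratioWeight x z * (G + 2 / 3 * Q) + (2 * C + 4 * b) * (1 / z) by
    refine h_sum.trans ((add_le_add_right
      (mul_le_mul_of_nonneg_left h_inv (by positivity)) _).trans_eq ?_)
    ring
  rcases le_total z 4 with hz4 | hz4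
  · have h_b : b ≤ 4 * b * (1 / z) := by
      rw [mul_one_div, le_div_iff₀ hz]
      nlinarith
    calc shiftMean γ κ z ≤ 4 * b * (1 / z) := (h.shiftMean_kappa_mem z).2.trans h_b
      _ ≤ 10 / 9 * ratioWeight x z * (G + 2 / 3 * Q) + (2 * C + 4 * b) * (1 / z) := by
          rw [add_mul, ← add_assoc]
          exact le_add_of_nonneg_left (by positivity)
  · have h_exp : Real.exp (-(z / 2)) ≤ 2 * (1 / z) := by
      rw [Real.exp_neg, inv_le_comm₀ (Real.exp_pos _) (by positivity), mul_one_div, inv_div]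
      linarith [Real.add_one_le_exp (z / 2)]
    have h_window := h_mean z hz4 (10 / 9 * ratioWeight x z * (G + 2 / 3 * Q)) (by positivity)
      fun y hy => ((h.psi_lt _ (h.D_mem y)).le.trans_eq (h.D_eq y)).trans
        ((mixMean_le_ratioWeight_mul h.isBddMeasurable_shiftMean_kappa
          (fun t => (h.shiftMean_kappa_mem t).1) hQ h.p_nonneg h.p_le_half hx0 hkQ
          (by linarith [(abs_le.1 hy).1])).trans
        (mul_le_mul_of_nonneg_right (ratioWeight_le_of_window hx0 hz hy) (by positivity)))
    have h_b : 0 ≤ 4 * b * (1 / z) := by positivity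
    linarith [mul_le_mul_of_nonneg_left h_exp hC]

lemma exists_shiftMean_kappa_le_mul_runMean (h : Equilibrium γ p b L w ψ D κ) :
    ∃ C ≥ 1, ∀ x ≥ 1, shiftMean γ κ x ≤ C * runMean (shiftMean γ κ) x := by
  obtain ⟨A, hA, h_improve⟩ := h.exists_shiftMean_kappa_le_ratioWeight_mul
  refine ⟨27 / 7 * A + 1, by linarith, fun x hx => ?_⟩
  have hx0 : 0 < x := by linarith
  set T := (fun z => shiftMean γ κ z / ratioWeight x z) '' Ioi 0
  have h_bdd : BddAbove T := by
    refine ⟨b, forall_mem_image.2 fun z hz => ?_⟩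
    exact (div_le_self (h.shiftMean_kappa_mem z).1 (one_le_ratioWeight hx0 hz)).trans
      (h.shiftMean_kappa_mem z).2
  have h_weight {z : ℝ} (hz : 0 < z) : 0 < ratioWeight x z :=
    zero_lt_one.trans_le (one_le_ratioWeight hx0 hz)
  have h_sup : ∀ z > 0, shiftMean γ κ z ≤ sSup T * ratioWeight x z := fun z hz =>
    (div_le_iff₀ (h_weight hz)).1 (le_csSup h_bdd (mem_image_of_mem _ hz))
  have h_at : shiftMean γ κ x ≤ sSup T := by simpa [ratioWeight_self hx0] using h_sup x hx0
  have h_le : sSup T ≤ 20 / 27 * sSup T + A * runMean (shiftMean γ κ) x :=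
    csSup_le ⟨_, mem_image_of_mem _ (mem_Ioi.2 hx0)⟩ (forall_mem_image.2 fun z hz =>
      (div_le_iff₀ (h_weight hz)).2
        (h_improve x hx _ ((h.shiftMean_kappa_mem x).1.trans h_at) h_sup z hz))
  linarith [h.runMean_pos hx]

end Equilibrium

section SlowVariation

variable {k : ℝ → ℝ} {C x z : ℝ}

lemma hasDerivAt_runMean (hk : Continuous k) (hx : x ≠ 0) :
    HasDerivAt (runMean k) ((k x - runMean k x) / x) x := by
  have h_int : HasDerivAt (fun y => ∫ t in (0 : ℝ)..y, k t) (k x) x :=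
    intervalIntegral.integral_hasDerivAt_right (hk.intervalIntegrable 0 x)
      (hk.stronglyMeasurableAtFilter _ _) hk.continuousAt
  have h_div := h_int.div (hasDerivAt_id x) hx
  rw [← mul_runMean, id_eq] at h_div
  refine (h_div.congr_deriv (by field_simp)).congr_of_eventuallyEq ?_
  filter_upwards [isOpen_ne.mem_nhds hx] with y hy
  rw [Pi.div_apply, ← mul_runMean, id_eq, mul_div_cancel_left₀ _ hy]

lemma abs_log_runMean_sub_le (hk : Continuous k) (hk0 : ∀ y, 0 ≤ k y) (hC : 1 ≤ C)
    (h_pos : ∀ y ≥ 1, 0 < runMean k y) (h : ∀ y ≥ 1, k y ≤ C * runMean k y) (hx : 1 ≤ x)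
    (hxz : x ≤ z) :
    |Real.log (runMean k z) - Real.log (runMean k x)| ≤ C * (Real.log z - Real.log x) := by
  refine abs_sub_le_of_abs_deriv_le hxz
    (fun t ht => (hasDerivAt_runMean hk (by linarith [ht.1])).log (h_pos t (hx.trans ht.1)).ne')
    (fun t ht => Real.hasDerivAt_log (by linarith [ht.1])) fun t ht => ?_
  have ht0 : 0 < t := by linarith [ht.1]
  have h_mean := h_pos t (hx.trans ht.1)
  have h_abs : |k t - runMean k t| ≤ C * runMean k t :=
    abs_le.2 ⟨by nlinarith [hk0 t], by linarith [h t (hx.trans ht.1)]⟩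
  rw [div_right_comm, abs_div, abs_of_pos ht0, abs_div, abs_of_pos h_mean, div_eq_mul_inv]
  exact mul_le_mul_of_nonneg_right ((div_le_iff₀ h_mean).2 h_abs) (inv_nonneg.2 ht0.le)

lemma abs_log_sub_log_le_of_window {ε : ℝ} (hε : ε ≤ 1 / 2) (hx : 0 < x)
    (hz : |z - x| ≤ ε * x) : |Real.log z - Real.log x| ≤ 2 * ε := by
  have h_window := abs_le.1 hz
  have h_half : x / 2 ≤ z := by nlinarith
  have hz0 : 0 < z := by linarith
  have hε0 : 0 ≤ ε := nonneg_of_mul_nonneg_left ((abs_nonneg _).trans hz) hx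
  have h_upper := Real.log_le_sub_one_of_pos (div_pos hz0 hx)
  have h_lower := Real.log_le_sub_one_of_pos (div_pos hx hz0)
  rw [Real.log_div hz0.ne' hx.ne', div_sub_one hx.ne'] at h_upper
  rw [Real.log_div hx.ne' hz0.ne', div_sub_one hz0.ne'] at h_lower
  have h_ratio_upper : (z - x) / x ≤ ε := (div_le_iff₀ hx).2 h_window.2
  have h_ratio_lower : (x - z) / z ≤ 2 * ε := (div_le_iff₀ hz0).2 (by nlinarith)
  exact abs_le.2 ⟨by linarith, by linarith⟩

-- The logarithmic derivative of the running mean is `O(1 / x)`.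
lemma exists_abs_runMean_sub_le_of_window (hk : Continuous k) (hk0 : ∀ y, 0 ≤ k y) (hC : 1 ≤ C)
    (h_pos : ∀ y ≥ 1, 0 < runMean k y) (h : ∀ y ≥ 1, k y ≤ C * runMean k y) {δ : ℝ} (hδ : 0 < δ) :
    ∃ ε ∈ Ioc 0 (1 / 2), ∀ x ≥ 2, ∀ z, |z - x| ≤ ε * x →
      |runMean k z - runMean k x| ≤ δ * runMean k x := by
  refine ⟨min (1 / 2) (min 1 (δ / 2) / (2 * C)), ⟨by positivity, min_le_left _ _⟩,
    fun x hx z hz => ?_⟩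
  set ε := min (1 / 2) (min 1 (δ / 2) / (2 * C))
  have h_window := abs_le.1 hz
  have hz1 : 1 ≤ z := by nlinarith [min_le_left (1 / 2) (min 1 (δ / 2) / (2 * C))]
  have h_log : |Real.log (runMean k z) - Real.log (runMean k x)| ≤ min 1 (δ / 2) := by
    calc |Real.log (runMean k z) - Real.log (runMean k x)|
        ≤ C * |Real.log z - Real.log x| := by
          rcases le_total x z with hxz | hzx
          · exact (abs_log_runMean_sub_le hk hk0 hC h_pos h (by linarith) hxz).trans
              (mul_le_mul_of_nonneg_left (le_abs_self _) (by linarith))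
          · rw [abs_sub_comm, abs_sub_comm (Real.log z)]
            exact (abs_log_runMean_sub_le hk hk0 hC h_pos h hz1 hzx).trans
              (mul_le_mul_of_nonneg_left (le_abs_self _) (by linarith))
      _ ≤ C * (2 * (min 1 (δ / 2) / (2 * C))) := by
          gcongr
          exact (abs_log_sub_log_le_of_window (min_le_left _ _) (by linarith) hz).trans
            (mul_le_mul_of_nonneg_left (min_le_right _ _) zero_le_two)
      _ = min 1 (δ / 2) := by field_simp
  have hx_pos := h_pos x (by linarith)
  have h_exp := (Real.abs_exp_sub_one_le (h_log.trans (min_le_left _ _))).trans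
    (mul_le_mul_of_nonneg_left (h_log.trans (min_le_right _ _)) zero_le_two)
  rw [Real.exp_sub, Real.exp_log (h_pos z hz1), Real.exp_log hx_pos, div_sub_one hx_pos.ne',
    abs_div, abs_of_pos hx_pos, div_le_iff₀ hx_pos] at h_exp
  linarith

end SlowVariation

lemma tendsto_zero_of_eventually_abs_le_half {f : ℝ → ℝ} {e₀ : ℝ}
    (h₀ : ∀ᶠ x in atTop, |f x| ≤ e₀)
    (h : ∀ e ≥ 0, (∀ᶠ x in atTop, |f x| ≤ e) → ∀ η > 0, ∀ᶠ x in atTop, |f x| ≤ e / 2 + η) :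
    Tendsto f atTop (nhds 0) := by
  have h_bdd : IsBoundedUnder (· ≤ ·) atTop fun x => |f x| := ⟨e₀, h₀⟩
  have h_cobdd : IsCoboundedUnder (· ≤ ·) atTop fun x => |f x| :=
    (isBoundedUnder_of ⟨0, fun x => abs_nonneg (f x)⟩ :
      IsBoundedUnder (· ≥ ·) atTop fun x => |f x|).isCoboundedUnder_le
  have h_nonpos : limsup (fun x => |f x|) atTop ≤ 0 := by
    by_contra! h_pos
    set s := limsup (fun x => |f x|) atTop
    have h_near : ∀ᶠ x in atTop, |f x| ≤ 5 / 4 * s :=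
      (eventually_lt_of_limsup_lt (by linarith : s < 5 / 4 * s) h_bdd).mono fun x hx => hx.le
    linarith [limsup_le_of_le h_cobdd (h _ (by positivity) h_near (s / 8) (by positivity))]
  refine (tendsto_zero_iff_abs_tendsto_zero f).2 (tendsto_order.2
    ⟨fun a ha => .of_forall fun x => ha.trans_le (abs_nonneg _), fun a ha => ?_⟩)
  exact eventually_lt_of_limsup_lt (h_nonpos.trans_lt ha) h_bdd

namespace Equilibrium

variable {γ : Measure ℝ} [IsProbabilityMeasure γ] {p b L : ℝ} {w ψ D κ : ℝ → ℝ}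

lemma exists_abs_runMean_sub_le (h : Equilibrium γ p b L w ψ D κ) {δ : ℝ} (hδ : 0 < δ) :
    ∃ ε ∈ Ioc 0 (1 / 2), ∀ x ≥ 2, ∀ z, |z - x| ≤ ε * x →
      |runMean (shiftMean γ κ) z - runMean (shiftMean γ κ) x|
        ≤ δ * runMean (shiftMean γ κ) x := by
  obtain ⟨C, hC, h_le⟩ := h.exists_shiftMean_kappa_le_mul_runMean
  exact exists_abs_runMean_sub_le_of_window h.continuous_shiftMean
    (fun y => (h.shiftMean_kappa_mem y).1) hC (fun y hy => h.runMean_pos hy) h_le hδ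

lemma eventually_mul_exp_le_runMean (h : Equilibrium γ p b L w ψ D κ) (C : ℝ) {η : ℝ}
    (hη : 0 < η) :
    ∀ᶠ x in atTop, C * Real.exp (-(x / 2)) ≤ η * runMean (shiftMean γ κ) x := by
  obtain ⟨c, hc, h_le⟩ := h.exists_div_le_runMean
  have h_lim : Tendsto (fun x : ℝ => 2 * C * ((x / 2) ^ 1 * Real.exp (-(x / 2)))) atTop
      (nhds (2 * C * 0)) :=
    ((Real.tendsto_pow_mul_exp_neg_atTop_nhds_zero 1).comp
      (tendsto_id.atTop_div_const zero_lt_two)).const_mul (2 * C)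
  rw [mul_zero] at h_lim
  filter_upwards [h_lim.eventually_lt_const (mul_pos hη hc), eventually_ge_atTop 1] with x hx hx1
  have hx0 : 0 < x := by linarith
  calc C * Real.exp (-(x / 2)) = 2 * C * ((x / 2) ^ 1 * Real.exp (-(x / 2))) / x := by field_simp
    _ ≤ η * c / x := by gcongr
    _ = η * (c / x) := mul_div_assoc _ _ _
    _ ≤ η * runMean (shiftMean γ κ) x := mul_le_mul_of_nonneg_left (h_le x hx1) hη.le

variable {μ e δ : ℝ}

lemma abs_D_sub_mul_runMean_le (h : Equilibrium γ p b L w ψ D κ)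
    (hμ : μ = p * (L * μ) + (1 - p)) {z : ℝ} (hz : 1 ≤ z)
    (h_ratio : |shiftMean γ κ z / runMean (shiftMean γ κ) z - L * μ| ≤ e) :
    |D z - μ * runMean (shiftMean γ κ) z| ≤ e / 2 * runMean (shiftMean γ κ) z := by
  have h_pos := h.runMean_pos hz
  rw [div_sub' h_pos.ne', abs_div, abs_of_pos h_pos, div_le_iff₀ h_pos] at h_ratio
  have h_eq : D z - μ * runMean (shiftMean γ κ) z
      = p * (shiftMean γ κ z - runMean (shiftMean γ κ) z * (L * μ)) := by
    rw [h.D_eq, mixMean]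
    linear_combination (-runMean (shiftMean γ κ) z) * hμ
  rw [h_eq, abs_mul, abs_of_nonneg h.p_nonneg]
  linarith [mul_le_mul h.p_le_half h_ratio (abs_nonneg _) (by norm_num)]

lemma abs_psi_sub_mul_runMean_le (h : Equilibrium γ p b L w ψ D κ)
    (hμ : μ = p * (L * μ) + (1 - p)) (hμ0 : 0 ≤ μ) (hμ1 : μ ≤ 1) (he : 0 ≤ e) (hδ : 0 ≤ δ)
    (hδ1 : δ ≤ 1) {x z : ℝ} (hz : 1 ≤ z)
    (h_psi : |ψ (D z) - L * D z| ≤ δ * D z)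
    (h_ratio : |shiftMean γ κ z / runMean (shiftMean γ κ) z - L * μ| ≤ e)
    (h_slow : |runMean (shiftMean γ κ) z - runMean (shiftMean γ κ) x|
      ≤ δ * runMean (shiftMean γ κ) x) :
    |ψ (D z) - L * μ * runMean (shiftMean γ κ) x|
      ≤ (e / 2 + δ * (3 + 3 * e)) * runMean (shiftMean γ κ) x := by
  have h_D := h.abs_D_sub_mul_runMean_le hμ hz h_ratio
  have hLμ : L * μ ≤ 1 := mul_le_one₀ h.L_le_one hμ0 hμ1
  have hLμ0 : 0 ≤ L * μ := mul_nonneg h.L_nonneg hμ0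
  set Gz := runMean (shiftMean γ κ) z
  set Gx := runMean (shiftMean γ κ) x
  have h_pos : 0 < Gz := h.runMean_pos hz
  have h_Gz : Gz ≤ (1 + δ) * Gx := by linarith [(abs_le.1 h_slow).2]
  have h_Gx : 0 < Gx := pos_of_mul_pos_right (h_pos.trans_le h_Gz) (by linarith)
  have h_D_le : D z ≤ (1 + e) * (2 * Gx) := by
    calc D z ≤ (μ + e / 2) * Gz := by linarith [(abs_le.1 h_D).2]
      _ ≤ (1 + e) * ((1 + δ) * Gx) := by gcongr; linarith
      _ ≤ (1 + e) * (2 * Gx) := by gcongr; linarith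
  calc |ψ (D z) - L * μ * Gx|
      = |(ψ (D z) - L * D z) + L * (D z - μ * Gz) + L * μ * (Gz - Gx)| := by ring_nf
    _ ≤ |ψ (D z) - L * D z| + L * |D z - μ * Gz| + L * μ * |Gz - Gx| := by
        refine (abs_add_three _ _ _).trans_eq ?_
        rw [abs_mul L, abs_mul (L * μ), abs_of_nonneg h.L_nonneg, abs_of_nonneg hLμ0]
    _ ≤ δ * ((1 + e) * (2 * Gx)) + 1 * (e / 2 * ((1 + δ) * Gx)) + 1 * (δ * Gx) := by
        gcongr
        · exact h_psi.trans (by gcongr)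
        · exact h.L_le_one
        · exact h_D.trans (by gcongr)
    _ ≤ (e / 2 + δ * (3 + 3 * e)) * Gx := by
        linarith [mul_nonneg (mul_nonneg hδ he) h_Gx.le]

-- One step of the contraction: an error `e` in `k / G` reaches `D / G` with factor `p ≤ 1 / 2`,
-- then `κ ≈ ψ ∘ D ≈ L * D` does not increase it.
lemma eventually_abs_ratio_sub_le_half (h : Equilibrium γ p b L w ψ D κ)
    (hμ : μ = p * (L * μ) + (1 - p)) (hμ0 : 0 ≤ μ) (hμ1 : μ ≤ 1) (he : 0 ≤ e)
    (h_ratio : ∀ᶠ x in atTop, |shiftMean γ κ x / runMean (shiftMean γ κ) x - L * μ| ≤ e)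
    {η : ℝ} (hη : 0 < η) :
    ∀ᶠ x in atTop, |shiftMean γ κ x / runMean (shiftMean γ κ) x - L * μ| ≤ e / 2 + η := by
  obtain ⟨δ, hδ, hδ1, hδη⟩ : ∃ δ > 0, δ ≤ 1 ∧ δ * (4 + 3 * e) ≤ η :=
    ⟨min 1 (η / (4 + 3 * e)), by positivity, min_le_left _ _,
      (le_div_iff₀ (by positivity)).1 (min_le_right _ _)⟩
  obtain ⟨ε, hε, h_slow⟩ := h.exists_abs_runMean_sub_le hδ
  obtain ⟨C₁, -, h_upper⟩ :=
    h.exists_shiftMean_kappa_le_add_exp hε.1 (hε.2.trans_lt (by norm_num))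
  obtain ⟨C₂, -, h_lower⟩ := h.exists_sub_exp_le_shiftMean_kappa hε.1
  obtain ⟨d, hd, -, h_deriv⟩ := h.exists_deriv_near hδ one_pos
  obtain ⟨X, hX⟩ := eventually_atTop.1 ((h.tendsto_D.eventually_lt_const hd.1).and h_ratio)
  filter_upwards [h.eventually_mul_exp_le_runMean C₁ hδ, h.eventually_mul_exp_le_runMean C₂ hδ,
    eventually_ge_atTop 4, eventually_ge_atTop (2 * X)] with x hx₁ hx₂ hx4 hxX
  have h_pos := h.runMean_pos (by linarith : 1 ≤ x)
  have h_window (z : ℝ) (hz : |z - x| ≤ ε * x) :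
      |ψ (D z) - L * μ * runMean (shiftMean γ κ) x|
        ≤ (e / 2 + δ * (3 + 3 * e)) * runMean (shiftMean γ κ) x := by
    have hz_half : x / 2 ≤ z := by nlinarith [(abs_le.1 hz).1, hε.2]
    obtain ⟨hz_d, hz_ratio⟩ := hX z (by linarith)
    exact h.abs_psi_sub_mul_runMean_le hμ hμ0 hμ1 he hδ.le hδ1 (by linarith)
      (h.abs_psi_sub_mul_le hd.2 h_deriv ⟨(h.D_mem z).1, hz_d.le⟩) hz_ratio
      (h_slow x (by linarith) z hz)
  have h_self : |x - x| ≤ ε * x := by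
    rw [sub_self, abs_zero]
    exact mul_nonneg hε.1.le (by linarith)
  have h_le := h_upper x hx4 (L * μ * runMean (shiftMean γ κ) x
      + (e / 2 + δ * (3 + 3 * e)) * runMean (shiftMean γ κ) x)
    (by linarith [(abs_le.1 (h_window x h_self)).2, (h.psi_mem x).1])
    fun z hz => by linarith [(abs_le.1 (h_window z hz)).2]
  have h_ge := h_lower x (L * μ * runMean (shiftMean γ κ) x
      - (e / 2 + δ * (3 + 3 * e)) * runMean (shiftMean γ κ) x)
    (by linarith [(abs_le.1 (h_window x h_self)).1, (h.psi_mem x).2])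
    fun z hz => by linarith [(abs_le.1 (h_window z hz)).1]
  have h_error := mul_le_mul_of_nonneg_right hδη h_pos.le
  rw [div_sub' h_pos.ne', abs_div, abs_of_pos h_pos, div_le_iff₀ h_pos]
  exact abs_le.2 ⟨by linarith, by linarith⟩

lemma tendsto_shiftMean_kappa_div_runMean (h : Equilibrium γ p b L w ψ D κ)
    (hμ : μ = p * (L * μ) + (1 - p)) (hμ0 : 0 ≤ μ) (hμ1 : μ ≤ 1) :
    Tendsto (fun x => shiftMean γ κ x / runMean (shiftMean γ κ) x) atTop (nhds (L * μ)) := by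
  obtain ⟨C, -, h_le⟩ := h.exists_shiftMean_kappa_le_mul_runMean
  have h_bdd : ∀ᶠ x in atTop,
      |shiftMean γ κ x / runMean (shiftMean γ κ) x - L * μ| ≤ C + L * μ := by
    filter_upwards [eventually_ge_atTop 1] with x hx
    have h_pos := h.runMean_pos hx
    have h_nonneg := div_nonneg (h.shiftMean_kappa_mem x).1 h_pos.le
    have h_upper := (div_le_iff₀ h_pos).2 (h_le x hx)
    have hLμ := mul_nonneg h.L_nonneg hμ0
    exact abs_le.2 ⟨by linarith, by linarith⟩
  exact tendsto_sub_nhds_zero_iff.1 (tendsto_zero_of_eventually_abs_le_half h_bdd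
    fun e he h_ratio η hη => h.eventually_abs_ratio_sub_le_half hμ hμ0 hμ1 he h_ratio hη)

theorem tendsto_runMean_div_D (h : Equilibrium γ p b L w ψ D κ) :
    Tendsto (fun x => runMean (shiftMean γ κ) x / D x) atTop
      (nhds ((1 - L * p) / (1 - p))) := by
  have hp := h.p_le_half
  have hLp : L * p ≤ p := mul_le_of_le_one_left h.p_nonneg h.L_le_one
  set μ := (1 - p) / (1 - L * p)
  have hμ : μ = p * (L * μ) + (1 - p) := by
    linarith [div_mul_cancel₀ (1 - p) (by linarith : 1 - L * p ≠ 0)]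
  have h_lim : Tendsto (fun x => p * (shiftMean γ κ x / runMean (shiftMean γ κ) x) + (1 - p)) atTop
      (nhds μ) := by
    have h_ratio :=
      h.tendsto_shiftMean_kappa_div_runMean hμ (div_nonneg (by linarith) (by linarith))
      ((div_le_one (by linarith)).2 (by linarith))
    simpa only [← hμ] using (h_ratio.const_mul p).add_const (1 - p)
  rw [← inv_div (1 - p)]
  refine (h_lim.inv₀ (div_pos (by linarith) (by linarith)).ne').congr' ?_
  filter_upwards [eventually_ge_atTop 1] with x hx
  have h_pos := (h.runMean_pos hx).ne'
  rw [h.D_eq, mixMean, ← inv_div]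
  field_simp

end Equilibrium

section Tail

variable {Ω : Type*}

lemma compl_setOf_gt (V : Ω → ℝ) (y : ℝ) : {ω | V ω > y}ᶜ = {ω | V ω ≤ y} := by
  ext
  simp

variable [MeasurableSpace Ω] {P : Measure Ω} {V : Ω → ℝ}

lemma measurableSet_setOf_gt (hV : Measurable V) (y : ℝ) : MeasurableSet {ω | V ω > y} :=
  measurableSet_lt measurable_const hV

lemma Pip_nonneg (y : ℝ) : 0 ≤ Pip P V y := ENNReal.toReal_nonneg

lemma Pim_nonneg (y : ℝ) : 0 ≤ Pim P V y := ENNReal.toReal_nonneg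

lemma Phip_add_Phim (hV : Measurable V) (hVi : Integrable V P) (y : ℝ) :
    Phip P V y + Phim P V y = ∫ ω, V ω ∂P := by
  rw [Phim, ← compl_setOf_gt]
  exact integral_add_compl (measurableSet_setOf_gt hV y) hVi

lemma Phip_sub_Phip (hV : Measurable V) (hVi : Integrable V P) {y z : ℝ} (h : y ≤ z) :
    Phip P V y - Phip P V z = ∫ ω in {ω | V ω > y} \ {ω | V ω > z}, V ω ∂P :=
  (setIntegral_sdiff (measurableSet_setOf_gt hV z) hVi.integrableOn
    fun _ hω => lt_of_le_of_lt h hω).symm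

variable [IsProbabilityMeasure P]

lemma Pip_add_Pim (hV : Measurable V) (y : ℝ) : Pip P V y + Pim P V y = 1 := by
  rw [Pim, ← compl_setOf_gt]
  exact probReal_add_probReal_compl (measurableSet_setOf_gt hV y)

lemma Pip_mem_Icc (y : ℝ) : Pip P V y ∈ Icc (0 : ℝ) 1 := ⟨Pip_nonneg y, measureReal_le_one⟩

lemma antitone_Pip : Antitone (Pip P V) := fun _ _ h =>
  measureReal_mono fun _ hω => lt_of_le_of_lt h hω

lemma measurable_Pim (hV : Measurable V) : Measurable (Pim P V) := by
  have h_eq : Pim P V = fun y => 1 - Pip P V y :=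
    funext fun y => eq_sub_of_add_eq' (Pip_add_Pim hV y)
  rw [h_eq]
  exact measurable_const.sub antitone_Pip.measurable

lemma measurable_Phip (hV : Measurable V) : Measurable (Phip P V) := by
  have h_joint : Measurable fun q : ℝ × Ω => if q.1 < V q.2 then V q.2 else 0 :=
    .ite (measurableSet_lt measurable_fst (hV.comp measurable_snd)) (hV.comp measurable_snd)
      measurable_const
  have h_eq : Phip P V = fun y => ∫ ω, (if y < V ω then V ω else 0) ∂P := by
    funext y
    exact (integral_indicator (measurableSet_setOf_gt hV y)).symm
  rw [h_eq]
  exact (h_joint.stronglyMeasurable.integral_prod_right (ν := P)).measurable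

lemma measurable_Phim (hV : Measurable V) (hVi : Integrable V P) : Measurable (Phim P V) := by
  have h_eq : Phim P V = fun y => ∫ ω, V ω ∂P - Phip P V y :=
    funext fun y => eq_sub_of_add_eq' (Phip_add_Phim hV hVi y)
  rw [h_eq]
  exact measurable_const.sub (measurable_Phip hV)

lemma measurable_Psip (hV : Measurable V) : Measurable (Psip P V) :=
  (measurable_Phip hV).div antitone_Pip.measurable

lemma mul_measureReal_le_setIntegral (hVi : Integrable V P) {s : Set Ω} {c : ℝ}
    (h : ∀ᵐ ω ∂P.restrict s, c ≤ V ω) : c * P.real s ≤ ∫ ω in s, V ω ∂P := by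
  simpa [mul_comm] using integral_mono_ae (integrable_const c) hVi.integrableOn h

lemma setIntegral_le_mul_measureReal (hVi : Integrable V P) {s : Set Ω} {c : ℝ}
    (h : ∀ᵐ ω ∂P.restrict s, V ω ≤ c) : ∫ ω in s, V ω ∂P ≤ c * P.real s := by
  simpa [mul_comm] using integral_mono_ae hVi.integrableOn (integrable_const c) h

lemma mul_Pip_le_Phip (hV : Measurable V) (hVi : Integrable V P) (y : ℝ) :
    y * Pip P V y ≤ Phip P V y :=
  mul_measureReal_le_setIntegral hVi <|
    ae_restrict_of_forall_mem (measurableSet_setOf_gt hV y) fun _ hω => le_of_lt hω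

lemma Phim_le_mul_Pim (hV : Measurable V) (hVi : Integrable V P) (y : ℝ) :
    Phim P V y ≤ y * Pim P V y :=
  setIntegral_le_mul_measureReal hVi <|
    ae_restrict_of_forall_mem (measurableSet_le hV measurable_const) fun _ hω => hω

lemma Phim_mul_Pip_le (hV : Measurable V) (hVi : Integrable V P) (y : ℝ) :
    Phim P V y * Pip P V y ≤ Phip P V y * Pim P V y := by
  have h_above := mul_le_mul_of_nonneg_right (mul_Pip_le_Phip (P := P) hV hVi y)
    (Pim_nonneg (P := P) (V := V) y)
  have h_below := mul_le_mul_of_nonneg_right (Phim_le_mul_Pim (P := P) hV hVi y)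
    (Pip_nonneg (P := P) (V := V) y)
  linarith

lemma integral_mul_Pip_le_Phip (hV : Measurable V) (hVi : Integrable V P) (y : ℝ) :
    (∫ ω, V ω ∂P) * Pip P V y ≤ Phip P V y := by
  have h_cross := Phim_mul_Pip_le (P := P) hV hVi y
  rw [← Phip_add_Phim hV hVi y]
  rw [eq_sub_of_add_eq' (Pip_add_Pim (P := P) hV y)] at h_cross
  linarith

lemma Phim_le_integral_mul_Pim (hV : Measurable V) (hVi : Integrable V P) (y : ℝ) :
    Phim P V y ≤ (∫ ω, V ω ∂P) * Pim P V y := by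
  have h_cross := Phim_mul_Pip_le (P := P) hV hVi y
  rw [← Phip_add_Phim hV hVi y]
  rw [eq_sub_of_add_eq (Pip_add_Pim (P := P) hV y)] at h_cross
  linarith

lemma measurableSet_slab (hV : Measurable V) (y z : ℝ) :
    MeasurableSet ({ω | V ω > y} \ {ω | V ω > z}) :=
  (measurableSet_setOf_gt hV y).diff (measurableSet_setOf_gt hV z)

lemma Pip_sub_Pip (hV : Measurable V) {y z : ℝ} (h : y ≤ z) :
    Pip P V y - Pip P V z = P.real ({ω | V ω > y} \ {ω | V ω > z}) :=
  (measureReal_sdiff (fun _ hω => lt_of_le_of_lt h hω) (measurableSet_setOf_gt hV z)).symm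

lemma mul_Pip_sub_le_Phip_sub (hV : Measurable V) (hVi : Integrable V P) {y z : ℝ} (h : y ≤ z) :
    y * (Pip P V y - Pip P V z) ≤ Phip P V y - Phip P V z := by
  rw [Phip_sub_Phip hV hVi h, Pip_sub_Pip hV h]
  exact mul_measureReal_le_setIntegral hVi <|
    ae_restrict_of_forall_mem (measurableSet_slab hV y z) fun _ hω => le_of_lt hω.1

lemma Phip_sub_le_mul_Pip_sub (hV : Measurable V) (hVi : Integrable V P) {y z : ℝ} (h : y ≤ z) :
    Phip P V y - Phip P V z ≤ z * (Pip P V y - Pip P V z) := by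
  rw [Phip_sub_Phip hV hVi h, Pip_sub_Pip hV h]
  exact setIntegral_le_mul_measureReal hVi <|
    ae_restrict_of_forall_mem (measurableSet_slab hV y z) fun _ hω => not_lt.1 hω.2

lemma abs_Phip_sub_mul_Pip_sub_le (hV : Measurable V) (hVi : Integrable V P) (y z : ℝ) :
    |Phip P V z - Phip P V y - y * (Pip P V z - Pip P V y)| ≤
      |Pip P V z - Pip P V y| * |z - y| := by
  rcases le_total y z with h | h
  · have h_lower := mul_Pip_sub_le_Phip_sub (P := P) hV hVi h
    have h_upper := Phip_sub_le_mul_Pip_sub (P := P) hV hVi h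
    have h_anti := antitone_Pip (P := P) (V := V) h
    rw [abs_of_nonpos (by linarith), abs_of_nonpos (by linarith), abs_of_nonneg (by linarith)]
    linarith
  · have h_lower := mul_Pip_sub_le_Phip_sub (P := P) hV hVi h
    have h_upper := Phip_sub_le_mul_Pip_sub (P := P) hV hVi h
    have h_anti := antitone_Pip (P := P) (V := V) h
    rw [abs_of_nonpos (by linarith), abs_of_nonneg (by linarith), abs_of_nonpos (by linarith)]
    linarith

lemma hasDerivAt_Phip (hV : Measurable V) (hVi : Integrable V P) {y v : ℝ}
    (h : HasDerivAt (Pip P V) v y) : HasDerivAt (Phip P V) (y * v) y := by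
  have h_diff : HasDerivAt (fun z => Phip P V z - y * Pip P V z) 0 y := by
    rw [hasDerivAt_iff_isLittleO, Asymptotics.isLittleO_iff]
    intro c hc
    filter_upwards [Metric.tendsto_nhds.1 h.continuousAt.tendsto c hc] with z hz
    have h_bound := abs_Phip_sub_mul_Pip_sub_le (P := P) hV hVi y z
    calc ‖Phip P V z - y * Pip P V z - (Phip P V y - y * Pip P V y) - (z - y) • (0 : ℝ)‖
        = |Phip P V z - Phip P V y - y * (Pip P V z - Pip P V y)| := by
          rw [smul_zero, Real.norm_eq_abs]
          ring_nf
      _ ≤ |Pip P V z - Pip P V y| * |z - y| := h_bound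
      _ ≤ c * ‖z - y‖ := mul_le_mul_of_nonneg_right hz.le (abs_nonneg _)
  have h_sum : (fun z => Phip P V z - y * Pip P V z + y * Pip P V z) = Phip P V :=
    funext fun z => sub_add_cancel _ _
  simpa only [h_sum, zero_add] using h_diff.fun_add (h.const_mul y)

lemma hasDerivAt_Psip (hV : Measurable V) (hVi : Integrable V P) {y v : ℝ}
    (h : HasDerivAt (Pip P V) v y) (hy : Pip P V y ≠ 0) :
    HasDerivAt (Psip P V) (v * (y - Psip P V y) / Pip P V y) y := by
  have h_eq : v * (y - Psip P V y) / Pip P V y =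
      (y * v * Pip P V y - Phip P V y * v) / Pip P V y ^ 2 := by
    rw [Psip]
    field_simp
  rw [h_eq]
  exact (hasDerivAt_Phip hV hVi h).fun_div h hy

end Tail

section SuppIoo

variable {Ω : Type*} [MeasurableSpace Ω] {P : Measure Ω} [IsProbabilityMeasure P] {V : Ω → ℝ}
  {m M : ℝ}

lemma _root_.SuppIoo.integrable (hs : SuppIoo P V m M) (hV : Measurable V) : Integrable V P :=
  .of_mem_Icc m M hV.aemeasurable hs.2.1

lemma _root_.SuppIoo.Pip_pos (hs : SuppIoo P V m M) {y : ℝ} (hy : y < M) : 0 < Pip P V y :=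
  ENNReal.toReal_pos (hs.2.2.1 y hy).ne' (measure_ne_top _ _)

lemma _root_.SuppIoo.Pim_pos (hs : SuppIoo P V m M) {y : ℝ} (hy : m < y) : 0 < Pim P V y :=
  ENNReal.toReal_pos (hs.2.2.2 y hy).ne' (measure_ne_top _ _)

lemma _root_.SuppIoo.Phip_le (hs : SuppIoo P V m M) (hV : Measurable V) (y : ℝ) :
    Phip P V y ≤ M * Pip P V y :=
  setIntegral_le_mul_measureReal (hs.integrable hV) <|
    ae_restrict_of_ae (hs.2.1.mono fun _ hω => hω.2)

lemma _root_.SuppIoo.le_Phim (hs : SuppIoo P V m M) (hV : Measurable V) (y : ℝ) :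
    m * Pim P V y ≤ Phim P V y :=
  mul_measureReal_le_setIntegral (hs.integrable hV) <|
    ae_restrict_of_ae (hs.2.1.mono fun _ hω => hω.1)

lemma _root_.SuppIoo.integral_mem_Ioo (hs : SuppIoo P V m M) (hV : Measurable V) :
    ∫ ω, V ω ∂P ∈ Ioo m M := by
  have hVi := hs.integrable hV
  obtain ⟨y, hmy, hyM⟩ := exists_between hs.1
  have h_mass := Pip_add_Pim (P := P) hV y
  have h_mean := Phip_add_Phim (P := P) hV hVi y
  constructor
  · calc m = m * Pip P V y + m * Pim P V y := by rw [← mul_add, h_mass, mul_one]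
      _ < y * Pip P V y + m * Pim P V y := by gcongr; exact hs.Pip_pos hyM
      _ ≤ Phip P V y + Phim P V y := add_le_add (mul_Pip_le_Phip hV hVi y) (hs.le_Phim hV y)
      _ = ∫ ω, V ω ∂P := h_mean
  · calc ∫ ω, V ω ∂P = Phip P V y + Phim P V y := h_mean.symm
      _ ≤ M * Pip P V y + y * Pim P V y :=
        add_le_add (hs.Phip_le hV y) (Phim_le_mul_Pim hV hVi y)
      _ < M * Pip P V y + M * Pim P V y := by gcongr; exact hs.Pim_pos hmy
      _ = M := by rw [← mul_add, h_mass, mul_one]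

lemma _root_.SuppIoo.Psip_le (hs : SuppIoo P V m M) (hV : Measurable V) {y : ℝ} (hy : y < M) :
    Psip P V y ≤ M :=
  (div_le_iff₀ (hs.Pip_pos hy)).2 (hs.Phip_le hV y)

lemma _root_.SuppIoo.integral_le_Psip (hs : SuppIoo P V m M) (hV : Measurable V) {y : ℝ}
    (hy : y < M) : ∫ ω, V ω ∂P ≤ Psip P V y :=
  (le_div_iff₀ (hs.Pip_pos hy)).2 (integral_mul_Pip_le_Phip hV (hs.integrable hV) y)

lemma _root_.SuppIoo.lt_Psip (hs : SuppIoo P V m M) (hV : Measurable V) {y : ℝ} (hy : y < M) :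
    y < Psip P V y := by
  have hVi := hs.integrable hV
  obtain ⟨z, hyz, hzM⟩ := exists_between hy
  refine (lt_div_iff₀ (hs.Pip_pos hy)).2 ?_
  calc y * Pip P V y = y * (Pip P V y - Pip P V z) + y * Pip P V z := by ring
    _ < y * (Pip P V y - Pip P V z) + z * Pip P V z := by gcongr; exact hs.Pip_pos hzM
    _ ≤ Phip P V y - Phip P V z + Phip P V z :=
      add_le_add (mul_Pip_sub_le_Phip_sub hV hVi hyz.le) (mul_Pip_le_Phip hV hVi z)
    _ = Phip P V y := sub_add_cancel _ _

lemma _root_.SuppIoo.monotoneOn_Psip (hs : SuppIoo P V m M) (hV : Measurable V) :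
    MonotoneOn (Psip P V) (Iio M) := by
  intro y hy z hz hyz
  have hVi := hs.integrable hV
  have h_slab : 0 ≤ Pip P V y - Pip P V z := sub_nonneg.2 (antitone_Pip hyz)
  refine (div_le_div_iff₀ (hs.Pip_pos hy) (hs.Pip_pos hz)).2 ?_
  calc Phip P V y * Pip P V z
      = Phip P V z * Pip P V z + (Phip P V y - Phip P V z) * Pip P V z := by ring
    _ ≤ Phip P V z * Pip P V z + z * (Pip P V y - Pip P V z) * Pip P V z := by
      gcongr
      · exact Pip_nonneg z
      · exact Phip_sub_le_mul_Pip_sub hV hVi hyz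
    _ = Phip P V z * Pip P V z + z * Pip P V z * (Pip P V y - Pip P V z) := by ring
    _ ≤ Phip P V z * Pip P V z + Phip P V z * (Pip P V y - Pip P V z) := by
      gcongr
      exact mul_Pip_le_Phip hV hVi z
    _ = Phip P V z * Pip P V y := by ring

lemma tendsto_const_sub_nhdsGT_zero (M : ℝ) :
    Tendsto (fun d => M - d) (nhdsWithin 0 (Ioi 0)) (nhdsWithin M (Iio M)) := by
  refine tendsto_nhdsWithin_of_tendsto_nhds_of_eventually_within _ ?_ ?_
  · refine Tendsto.mono_left ?_ nhdsWithin_le_nhds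
    simpa using (continuous_sub_left M).tendsto 0
  · filter_upwards [self_mem_nhdsWithin] with d hd
    exact sub_lt_self M hd

lemma sub_mem_Ioo {d : ℝ} (hd : d ∈ Ioo 0 (M - m)) : M - d ∈ Ioo m M :=
  ⟨lt_sub_comm.1 hd.2, sub_lt_self M hd.1⟩

lemma _root_.SuppIoo.endpointLaw (hs : SuppIoo P V m M) (hV : Measurable V)
    (h_diff : DifferentiableOn ℝ (Pip P V) (Ioo m M)) {L : ℝ}
    (hL : Tendsto (deriv (Psip P V)) (nhdsWithin M (Iio M)) (nhds L)) :
    EndpointLaw (M - m) L (fun d => Pip P V (M - d)) (fun d => M - Psip P V (M - d)) := by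
  have h_deriv_Pip : ∀ d ∈ Ioo 0 (M - m),
      HasDerivAt (Pip P V) (deriv (Pip P V) (M - d)) (M - d) := fun d hd =>
    (h_diff.differentiableAt (isOpen_Ioo.mem_nhds (sub_mem_Ioo hd))).hasDerivAt
  have h_deriv_Psip := fun d hd => hasDerivAt_Psip hV (hs.integrable hV) (h_deriv_Pip d hd)
    (hs.Pip_pos (sub_mem_Ioo hd).2).ne'
  have h_deriv_psi : deriv (fun d => M - Psip P V (M - d)) = fun d => deriv (Psip P V) (M - d) := by
    funext d
    rw [deriv_const_sub, deriv_comp_const_sub, neg_neg]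
  refine
    { b_pos := sub_pos.2 hs.1
      measurable_w := antitone_Pip.measurable.comp (measurable_id.const_sub M)
      measurable_psi := ((measurable_Psip hV).comp (measurable_id.const_sub M)).const_sub M
      w_pos := fun d hd => hs.Pip_pos (sub_mem_Ioo hd).2
      w_le_one := fun d _ => (Pip_mem_Icc _).2
      w_mono := fun d _ d' _ h => antitone_Pip (sub_le_sub_left h M)
      psi_nonneg := fun d hd => sub_nonneg.2 (hs.Psip_le hV (sub_mem_Ioo hd).2)
      psi_lt := fun d hd => sub_lt_comm.1 (hs.lt_Psip hV (sub_mem_Ioo hd).2)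
      psi_mono := fun d hd d' hd' h => sub_le_sub_left
        (hs.monotoneOn_Psip hV (sub_mem_Ioo hd').2 (sub_mem_Ioo hd).2 (sub_le_sub_left h M)) M
      differentiableAt_psi := fun d hd =>
        ((h_deriv_Psip d hd).comp_const_sub M d).differentiableAt.const_sub M
      hasDerivAt_log_w := fun d hd => ?_
      tendsto_deriv_psi := ?_ }
  · have h_pos := hs.Pip_pos (sub_mem_Ioo hd).2
    convert ((h_deriv_Pip d hd).comp_const_sub M d).log h_pos.ne' using 1
    have h_gap : Psip P V (M - d) - (M - d) ≠ 0 :=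
      (sub_pos.2 (hs.lt_Psip hV (sub_mem_Ioo hd).2)).ne'
    rw [h_deriv_psi]
    dsimp only
    rw [(h_deriv_Psip d hd).deriv]
    rw [div_eq_div_iff (by rwa [sub_sub_eq_add_sub, add_comm, ← sub_sub_eq_add_sub]) h_pos.ne']
    field_simp
    ring
  · rw [h_deriv_psi]
    exact hL.comp (tendsto_const_sub_nhdsGT_zero M)

end SuppIoo

section Gaussian

variable {σ : ℝ}

/-- The centred Gaussian law of variance `σ ^ 2`, which has density `gq σ`. -/
noncomputable def gaussianLaw (σ : ℝ) : Measure ℝ :=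
  ProbabilityTheory.gaussianReal 0 (σ ^ 2).toNNReal

instance isProbabilityMeasure_gaussianLaw (σ : ℝ) : IsProbabilityMeasure (gaussianLaw σ) :=
  ProbabilityTheory.instIsProbabilityMeasureGaussianReal 0 _

lemma gq_neg (σ z : ℝ) : gq σ (-z) = gq σ z := by rw [gq, gq, neg_sq]

lemma gq_pos (hσ : 0 < σ) (z : ℝ) : 0 < gq σ z :=
  div_pos (Real.exp_pos _) (by positivity)

lemma continuous_gq (σ : ℝ) : Continuous (gq σ) := by
  unfold gq
  fun_prop

lemma toNNReal_sq_ne_zero (hσ : 0 < σ) : (σ ^ 2).toNNReal ≠ 0 :=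
  (Real.toNNReal_pos.2 (by positivity)).ne'

lemma gaussianPDFReal_eq_gq (hσ : 0 < σ) :
    ProbabilityTheory.gaussianPDFReal 0 (σ ^ 2).toNNReal = gq σ := by
  funext z
  rw [ProbabilityTheory.gaussianPDFReal, gq, Real.coe_toNNReal _ (sq_nonneg σ), sub_zero,
    Real.sqrt_mul (by positivity), Real.sqrt_sq hσ.le, mul_comm (Real.sqrt _)]
  exact (div_eq_inv_mul _ _).symm

lemma integrable_gq_sub (hσ : 0 < σ) (x : ℝ) : Integrable fun z => gq σ (x - z) := by
  rw [← gaussianPDFReal_eq_gq hσ]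
  exact (ProbabilityTheory.integrable_gaussianPDFReal 0 _).comp_sub_left x

lemma integral_gq_sub (hσ : 0 < σ) (x : ℝ) : ∫ z, gq σ (x - z) = 1 := by
  rw [integral_sub_left_eq_self (gq σ) volume x, ← gaussianPDFReal_eq_gq hσ]
  exact ProbabilityTheory.integral_gaussianPDFReal_eq_one 0 (toNNReal_sq_ne_zero hσ)

lemma integral_gaussianLaw (hσ : 0 < σ) (f : ℝ → ℝ) :
    ∫ u, f u ∂gaussianLaw σ = ∫ u, gq σ u * f u := by
  rw [gaussianLaw, ProbabilityTheory.integral_gaussianReal_eq_integral_smul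
    (toNNReal_sq_ne_zero hσ), gaussianPDFReal_eq_gq hσ]
  rfl

lemma shiftMean_gaussianLaw (hσ : 0 < σ) (f : ℝ → ℝ) (x : ℝ) :
    shiftMean (gaussianLaw σ) f x = ∫ z, f z * gq σ (x - z) := by
  rw [shiftMean, integral_gaussianLaw hσ,
    ← integral_add_left_eq_self (fun z => f z * gq σ (x - z)) x]
  congr 1 with u
  rw [sub_add_cancel_left, gq_neg, mul_comm]

lemma hasExpMoments_gaussianLaw (σ : ℝ) : HasExpMoments (gaussianLaw σ) := fun l =>
  ProbabilityTheory.integrable_exp_mul_abs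
    (ProbabilityTheory.integrable_exp_mul_gaussianReal l)
    (ProbabilityTheory.integrable_exp_mul_gaussianReal (-l))

lemma isOpenPosMeasure_gaussianLaw (hσ : 0 < σ) : (gaussianLaw σ).IsOpenPosMeasure :=
  (ProbabilityTheory.gaussianReal_absolutelyContinuous' 0
    (toNNReal_sq_ne_zero hσ)).isOpenPosMeasure

lemma shiftMean_gaussianLaw_eq_exp_mul (hσ : 0 < σ) (f : ℝ → ℝ) (x : ℝ) :
    shiftMean (gaussianLaw σ) f x =
      Real.exp (-x ^ 2 / (2 * σ ^ 2)) * ∫ z, f z * Real.exp (x / σ ^ 2 * z) ∂gaussianLaw σ := by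
  rw [shiftMean_gaussianLaw hσ, integral_gaussianLaw hσ, ← integral_const_mul]
  congr 1 with z
  have h_exponent : -(x - z) ^ 2 / (2 * σ ^ 2) =
      -x ^ 2 / (2 * σ ^ 2) + x / σ ^ 2 * z + -z ^ 2 / (2 * σ ^ 2) := by
    field_simp
    ring
  rw [gq, gq, h_exponent, Real.exp_add, Real.exp_add]
  ring

lemma continuous_integral_mul_exp {γ : Measure ℝ} (hγ : HasExpMoments γ) {f : ℝ → ℝ}
    (hf : AEStronglyMeasurable f γ) {C : ℝ} (hC : ∀ z, |f z| ≤ C) :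
    Continuous fun t => ∫ z, f z * Real.exp (t * z) ∂γ := by
  have h_nonneg : 0 ≤ C := (abs_nonneg _).trans (hC 0)
  refine continuous_iff_continuousAt.2 fun t₀ => continuousAt_of_dominated
    (bound := fun z => C * Real.exp ((|t₀| + 1) * |z|)) ?_ ?_ ((hγ _).const_mul C) ?_
  · exact .of_forall fun t => hf.mul (Continuous.aestronglyMeasurable (by fun_prop))
  · filter_upwards [Metric.ball_mem_nhds t₀ one_pos] with t ht
    refine .of_forall fun z => ?_
    have h_t : |t| ≤ |t₀| + 1 := by
      have := abs_sub_abs_le_abs_sub t t₀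
      rw [Metric.mem_ball, Real.dist_eq] at ht
      linarith
    rw [norm_mul, Real.norm_eq_abs, Real.norm_eq_abs, Real.abs_exp]
    refine mul_le_mul (hC z) (Real.exp_le_exp.2 ?_) (Real.exp_pos _).le h_nonneg
    calc t * z ≤ |t * z| := le_abs_self _
      _ = |t| * |z| := abs_mul t z
      _ ≤ (|t₀| + 1) * |z| := by gcongr
  · exact .of_forall fun z => Continuous.continuousAt (by fun_prop)

-- This includes non-measurable `f`, for which every `shiftMean` takes the junk value `0`.
lemma continuous_shiftMean_gaussianLaw (hσ : 0 < σ) {f : ℝ → ℝ} {C : ℝ} (hC : ∀ z, |f z| ≤ C) :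
    Continuous (shiftMean (gaussianLaw σ) f) := by
  rw [funext (shiftMean_gaussianLaw_eq_exp_mul hσ f)]
  refine Continuous.mul (by fun_prop) ?_
  by_cases hf : AEStronglyMeasurable f (gaussianLaw σ)
  · exact (continuous_integral_mul_exp (hasExpMoments_gaussianLaw σ) hf hC).comp
      (continuous_id.div_const _)
  · have h_junk : ∀ x, ∫ z, f z * Real.exp (x / σ ^ 2 * z) ∂gaussianLaw σ = 0 := fun x =>
      integral_non_aestronglyMeasurable fun h => hf <| by
        have h_inv : Continuous fun z => Real.exp (-(x / σ ^ 2 * z)) := by fun_prop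
        refine (h.mul h_inv.aestronglyMeasurable).congr (.of_forall fun z => ?_)
        simp only [Pi.mul_apply]
        rw [mul_assoc, ← Real.exp_add, add_neg_cancel, Real.exp_zero, mul_one]
    simpa only [h_junk] using continuous_const

end Gaussian

section Kernel

variable {σ : ℝ} {φ : ℝ → ℝ}

lemma gqbar_eq_runMean (σ x z : ℝ) : gqbar σ x z = runMean (fun y => gq σ (y - z)) x := by
  rcases eq_or_ne x 0 with rfl | hx
  · simp [gqbar, runMean, gq_neg]
  · rw [gqbar, if_neg hx, ← mul_runMean, one_div, inv_mul_cancel_left₀ hx]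

lemma measurable_gqbar (σ : ℝ) : Measurable fun q : ℝ × ℝ => gqbar σ q.1 q.2 := by
  simp_rw [gqbar_eq_runMean, runMean, intervalIntegral.integral_of_le (zero_le_one' ℝ)]
  have h_joint : Continuous fun r : (ℝ × ℝ) × ℝ => gq σ (r.1.1 * r.2 - r.1.2) :=
    (continuous_gq σ).comp (by fun_prop)
  exact h_joint.stronglyMeasurable.integral_prod_right.measurable

lemma measurable_integral_kernel (a c : ℝ) (hφ : Measurable φ) :
    Measurable fun x => ∫ z, (a * gq σ (x - z) + c * gqbar σ x z) * φ z := by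
  have h_gq : Measurable fun q : ℝ × ℝ => gq σ (q.1 - q.2) :=
    (continuous_gq σ).measurable.comp (measurable_fst.sub measurable_snd)
  have h_joint : Measurable fun q : ℝ × ℝ =>
      (a * gq σ (q.1 - q.2) + c * gqbar σ q.1 q.2) * φ q.2 :=
    ((h_gq.const_mul a).add ((measurable_gqbar σ).const_mul c)).mul (hφ.comp measurable_snd)
  exact h_joint.stronglyMeasurable.integral_prod_right.measurable

lemma IsBddMeasurable.integrable_mul_gq (hφ : IsBddMeasurable φ) (hσ : 0 < σ) (x : ℝ) :
    Integrable fun z => φ z * gq σ (x - z) := by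
  obtain ⟨C, hC⟩ := hφ.bdd
  exact (integrable_gq_sub hσ x).bdd_mul hφ.measurable.aestronglyMeasurable (.of_forall hC)

lemma IsBddMeasurable.integrable_mul_gq_prod (hφ : IsBddMeasurable φ) (hσ : 0 < σ) (x : ℝ) :
    Integrable (Function.uncurry fun t z => φ z * gq σ (x * t - z))
      ((volume.restrict (uIoc 0 1)).prod volume) := by
  obtain ⟨C, hC⟩ := hφ.bdd
  have h_gq : Continuous fun q : ℝ × ℝ => gq σ (x * q.1 - q.2) :=
    (continuous_gq σ).comp (by fun_prop)
  have h_integrable : Integrable (fun q : ℝ × ℝ => gq σ (x * q.1 - q.2))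
      ((volume.restrict (uIoc 0 1)).prod volume) := by
    refine (integrable_prod_iff h_gq.aestronglyMeasurable).2
      ⟨.of_forall fun t => integrable_gq_sub hσ (x * t), ?_⟩
    simp_rw [Real.norm_of_nonneg (gq_pos hσ _).le, integral_gq_sub hσ]
    exact integrableOn_const (by simp)
  exact h_integrable.bdd_mul (hφ.measurable.comp measurable_snd).aestronglyMeasurable
    (.of_forall fun q => hC q.2)

lemma mul_gqbar_eq_intervalIntegral (σ c x z : ℝ) :
    c * gqbar σ x z = ∫ t in (0 : ℝ)..1, c * gq σ (x * t - z) := by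
  rw [gqbar_eq_runMean, runMean, intervalIntegral.integral_const_mul]

lemma IsBddMeasurable.integrable_mul_gqbar (hφ : IsBddMeasurable φ) (hσ : 0 < σ) (x : ℝ) :
    Integrable fun z => φ z * gqbar σ x z := by
  simp_rw [mul_gqbar_eq_intervalIntegral, intervalIntegral.intervalIntegral_eq_integral_uIoc]
  exact (hφ.integrable_mul_gq_prod hσ x).integral_prod_right.const_mul _

lemma integral_mul_gqbar (hφ : IsBddMeasurable φ) (hσ : 0 < σ) (x : ℝ) :
    ∫ z, φ z * gqbar σ x z = runMean (shiftMean (gaussianLaw σ) φ) x := by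
  simp_rw [mul_gqbar_eq_intervalIntegral, runMean, shiftMean_gaussianLaw hσ]
  exact (intervalIntegral_integral_swap (hφ.integrable_mul_gq_prod hσ x)).symm

lemma integral_kernel (hφ : IsBddMeasurable φ) (hσ : 0 < σ) {N : ℕ} (hN : N ≠ 0)
    (x : ℝ) :
    ∫ z, (1 / (N : ℝ) * gq σ (x - z) + ((N : ℝ) - 1) / N * gqbar σ x z) * φ z =
      mixMean (1 / N) (shiftMean (gaussianLaw σ) φ) x := by
  have h_weight : ((N : ℝ) - 1) / N = 1 - 1 / N := by
    rw [sub_div, div_self (Nat.cast_ne_zero.2 hN)]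
  have h_split : ∀ z, (1 / (N : ℝ) * gq σ (x - z) + (1 - 1 / N) * gqbar σ x z) * φ z =
      1 / N * (φ z * gq σ (x - z)) + (1 - 1 / N) * (φ z * gqbar σ x z) := fun z => by ring
  simp_rw [h_weight, h_split]
  rw [integral_add ((hφ.integrable_mul_gq hσ x).const_mul _)
    ((hφ.integrable_mul_gqbar hσ x).const_mul _), integral_const_mul, integral_const_mul,
    integral_mul_gqbar hφ hσ, ← shiftMean_gaussianLaw hσ, mixMean]

-- `y ^ N * runMean h (x * y)` is a primitive of the integrand.
lemma mul_integral_mixMean_mul_pow {N : ℕ} (hN : N ≠ 0) {h : ℝ → ℝ} (h_cont : Continuous h)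
    (x : ℝ) :
    N * ∫ y in (0 : ℝ)..1, mixMean (1 / N) h (x * y) * y ^ (N - 1) = runMean h x := by
  obtain ⟨n, rfl⟩ := Nat.exists_eq_succ_of_ne_zero hN
  have h_comp : Continuous fun s => h (x * s) := by fun_prop
  set H : ℝ → ℝ := fun y => ∫ s in (0 : ℝ)..y, h (x * s) with hH
  have h_mul_runMean : ∀ y, y * runMean h (x * y) = H y := fun y => by
    simp_rw [hH, ← mul_runMean, runMean, mul_assoc]
  have h_deriv_H : ∀ y, HasDerivAt H (h (x * y)) y := fun y =>
    h_comp.integral_hasStrictDerivAt 0 y |>.hasDerivAt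
  have h_cont_H : Continuous H := continuous_iff_continuousAt.2 fun y => (h_deriv_H y).continuousAt
  have h_integrand : ∀ y, (n + 1 : ℕ) * (mixMean (1 / (n + 1 : ℕ)) h (x * y) * y ^ n) =
      n * y ^ (n - 1) * H y + y ^ n * h (x * y) := fun y => by
    rw [← h_mul_runMean, mixMean]
    rcases n with _ | n
    · simp
    · push_cast
      field_simp
      ring
  rw [Nat.succ_sub_one, ← intervalIntegral.integral_const_mul]
  simp_rw [h_integrand]
  rw [intervalIntegral.integral_eq_sub_of_hasDerivAt
    (fun y _ => (hasDerivAt_pow n y).mul (h_deriv_H y))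
    (Continuous.intervalIntegrable (by fun_prop) 0 1)]
  simp [← h_mul_runMean]

end Kernel

section Phi

variable {Ω : Type*} [MeasurableSpace Ω] {P : Measure Ω} {V : Ω → ℝ} {σ : ℝ}
  {g : ℝ → ℝ}

lemma abs_Phip_le (hVi : Integrable V P) (y : ℝ) : |Phip P V y| ≤ ∫ ω, |V ω| ∂P :=
  abs_integral_le_integral_abs.trans
    (setIntegral_le_integral hVi.abs (.of_forall fun _ => abs_nonneg _))

lemma abs_Phim_le (hVi : Integrable V P) (y : ℝ) : |Phim P V y| ≤ ∫ ω, |V ω| ∂P :=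
  abs_integral_le_integral_abs.trans
    (setIntegral_le_integral hVi.abs (.of_forall fun _ => abs_nonneg _))

lemma phip_eq_div (hσ : 0 < σ) (g : ℝ → ℝ) (x : ℝ) :
    phip P V σ g x = shiftMean (gaussianLaw σ) (fun y => Phip P V (g y)) x /
      shiftMean (gaussianLaw σ) (fun y => Pip P V (g y)) x := by
  rw [phip, shiftMean_gaussianLaw hσ, shiftMean_gaussianLaw hσ]

lemma phim_eq_div (hσ : 0 < σ) (g : ℝ → ℝ) (x : ℝ) :
    phim P V σ g x = shiftMean (gaussianLaw σ) (fun y => Phim P V (g y)) x /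
      shiftMean (gaussianLaw σ) (fun y => Pim P V (g y)) x := by
  rw [phim, shiftMean_gaussianLaw hσ, shiftMean_gaussianLaw hσ]

variable [IsProbabilityMeasure P]

lemma abs_Pip_le_one (y : ℝ) : |Pip P V y| ≤ 1 :=
  (abs_of_nonneg (Pip_nonneg y)).trans_le measureReal_le_one

lemma abs_Pim_le_one (y : ℝ) : |Pim P V y| ≤ 1 :=
  (abs_of_nonneg (Pim_nonneg y)).trans_le measureReal_le_one

lemma measurable_phig (hσ : 0 < σ) (hVi : Integrable V P) (g : ℝ → ℝ) :
    Measurable (phig P V σ g) := by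
  refine Measurable.ite measurableSet_Ici ?_ ?_
  · rw [funext (phip_eq_div hσ g)]
    exact (continuous_shiftMean_gaussianLaw hσ fun z => abs_Phip_le hVi (g z)).measurable.div
      (continuous_shiftMean_gaussianLaw hσ fun z => abs_Pip_le_one (g z)).measurable
  · rw [funext (phim_eq_div hσ g)]
    exact (continuous_shiftMean_gaussianLaw hσ fun z => abs_Phim_le hVi (g z)).measurable.div
      (continuous_shiftMean_gaussianLaw hσ fun z => abs_Pim_le_one (g z)).measurable

lemma _root_.SolvesE.measurable {N : ℕ} (hE : SolvesE P V σ N g) (hσ : 0 < σ)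
    (hVi : Integrable V P) : Measurable g := by
  rw [funext hE]
  exact measurable_integral_kernel _ _ (measurable_phig hσ hVi g)

lemma isBddMeasurable_Phip_comp (hV : Measurable V) (hVi : Integrable V P) (hg : Measurable g) :
    IsBddMeasurable fun y => Phip P V (g y) :=
  ⟨(measurable_Phip hV).comp hg, _, fun _ => abs_Phip_le hVi _⟩

lemma isBddMeasurable_Phim_comp (hV : Measurable V) (hVi : Integrable V P) (hg : Measurable g) :
    IsBddMeasurable fun y => Phim P V (g y) :=
  ⟨(measurable_Phim hV hVi).comp hg, _, fun _ => abs_Phim_le hVi _⟩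

lemma isBddMeasurable_Pip_comp (hg : Measurable g) : IsBddMeasurable fun y => Pip P V (g y) :=
  ⟨antitone_Pip.measurable.comp hg, 1, fun _ => abs_Pip_le_one _⟩

lemma isBddMeasurable_Pim_comp (hV : Measurable V) (hg : Measurable g) :
    IsBddMeasurable fun y => Pim P V (g y) :=
  ⟨(measurable_Pim hV).comp hg, 1, fun _ => abs_Pim_le_one _⟩

lemma shiftMean_const_mul (γ : Measure ℝ) (c : ℝ) (f : ℝ → ℝ) (x : ℝ) :
    shiftMean γ (fun y => c * f y) x = c * shiftMean γ f x :=
  integral_const_mul c fun u => f (x + u)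

lemma shiftMean_div_shiftMean_mem_Icc {γ : Measure ℝ} [IsProbabilityMeasure γ] {f w : ℝ → ℝ}
    (hf : IsBddMeasurable f) (hw : IsBddMeasurable w) (hw_pos : ∀ y, 0 < w y) {a b : ℝ}
    (ha : ∀ y, a * w y ≤ f y) (hb : ∀ y, f y ≤ b * w y) (x : ℝ) :
    shiftMean γ f x / shiftMean γ w x ∈ Icc a b := by
  have h_pos := shiftMean_pos (γ := γ) hw hw_pos x
  rw [mem_Icc, le_div_iff₀ h_pos, div_le_iff₀ h_pos, ← shiftMean_const_mul,
    ← shiftMean_const_mul]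
  exact ⟨shiftMean_mono ((IsBddMeasurable.const a).mul hw) hf ha x,
    shiftMean_mono hf ((IsBddMeasurable.const b).mul hw) hb x⟩

variable {m M : ℝ}

lemma _root_.SuppIoo.phip_mem_Icc (hs : SuppIoo P V m M) (hV : Measurable V) (hσ : 0 < σ)
    (hg : Measurable g) (hgM : ∀ y, g y < M) (x : ℝ) :
    phip P V σ g x ∈ Icc (∫ ω, V ω ∂P) M := by
  rw [phip_eq_div hσ]
  exact shiftMean_div_shiftMean_mem_Icc (isBddMeasurable_Phip_comp hV (hs.integrable hV) hg)
    (isBddMeasurable_Pip_comp hg) (fun y => hs.Pip_pos (hgM y))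
    (fun _ => integral_mul_Pip_le_Phip hV (hs.integrable hV) _) (fun _ => hs.Phip_le hV _) x

lemma _root_.SuppIoo.phim_mem_Icc (hs : SuppIoo P V m M) (hV : Measurable V) (hσ : 0 < σ)
    (hg : Measurable g) (hmg : ∀ y, m < g y) (x : ℝ) :
    phim P V σ g x ∈ Icc m (∫ ω, V ω ∂P) := by
  rw [phim_eq_div hσ]
  exact shiftMean_div_shiftMean_mem_Icc (isBddMeasurable_Phim_comp hV (hs.integrable hV) hg)
    (isBddMeasurable_Pim_comp hV hg) (fun y => hs.Pim_pos (hmg y))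
    (fun _ => hs.le_Phim hV _) (fun _ => Phim_le_integral_mul_Pim hV (hs.integrable hV) _) x

lemma _root_.SuppIoo.phig_mem_Icc (hs : SuppIoo P V m M) (hV : Measurable V) (hσ : 0 < σ)
    (hg : Measurable g) (hgr : ∀ y, g y ∈ Ioo m M) (x : ℝ) : phig P V σ g x ∈ Icc m M := by
  have h_mean := hs.integral_mem_Ioo hV
  rw [phig]
  split_ifs
  · exact Icc_subset_Icc_left h_mean.1.le (hs.phip_mem_Icc hV hσ hg (fun y => (hgr y).2) x)
  · exact Icc_subset_Icc_right h_mean.2.le (hs.phim_mem_Icc hV hσ hg (fun y => (hgr y).1) x)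

lemma _root_.SuppIoo.isBddMeasurable_phig (hs : SuppIoo P V m M) (hV : Measurable V) (hσ : 0 < σ)
    (hg : Measurable g) (hgr : ∀ y, g y ∈ Ioo m M) : IsBddMeasurable (phig P V σ g) :=
  .of_mem_Icc (measurable_phig hσ (hs.integrable hV) g) (hs.phig_mem_Icc hV hσ hg hgr)

lemma _root_.SuppIoo.sub_phip_mul_shiftMean (hs : SuppIoo P V m M) (hV : Measurable V)
    (hσ : 0 < σ) (hg : Measurable g) (hgM : ∀ y, g y < M) (x : ℝ) :
    (M - phip P V σ g x) * shiftMean (gaussianLaw σ) (fun y => Pip P V (g y)) x =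
      shiftMean (gaussianLaw σ) (fun y => (M - Psip P V (g y)) * Pip P V (g y)) x := by
  have h_Pip := isBddMeasurable_Pip_comp (P := P) (V := V) hg
  have h_pos := shiftMean_pos (γ := gaussianLaw σ) h_Pip (fun y => hs.Pip_pos (hgM y)) x
  have h_integrand : ∀ y, (M - Psip P V (g y)) * Pip P V (g y) =
      M * Pip P V (g y) - Phip P V (g y) := fun y => by
    rw [sub_mul, Psip, div_mul_cancel₀ _ (hs.Pip_pos (hgM y)).ne']
  simp_rw [h_integrand]
  rw [shiftMean_sub ((IsBddMeasurable.const M).mul h_Pip)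
    (isBddMeasurable_Phip_comp hV (hs.integrable hV) hg), shiftMean_const_mul, sub_mul,
    phip_eq_div hσ, div_mul_cancel₀ _ h_pos.ne']

end Phi

section UpperEnd

lemma runMean_const_sub {f : ℝ → ℝ} (hf : IsBddMeasurable f) (c x : ℝ) :
    runMean (fun y => c - f y) x = c - runMean f x := by
  rw [runMean, intervalIntegral.integral_sub intervalIntegrable_const
    (hf.intervalIntegrable_comp_mul x), intervalIntegral.integral_const, runMean]
  simp

lemma mixMean_const_sub {f : ℝ → ℝ} (hf : IsBddMeasurable f) (p c x : ℝ) :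
    mixMean p (fun y => c - f y) x = c - mixMean p f x := by
  rw [mixMean, mixMean, runMean_const_sub hf]
  ring

lemma shiftMean_const_sub {γ : Measure ℝ} [IsProbabilityMeasure γ] {f : ℝ → ℝ}
    (hf : IsBddMeasurable f) (c : ℝ) :
    shiftMean γ (fun y => c - f y) = fun x => c - shiftMean γ f x := by
  funext x
  rw [shiftMean_sub (.const c) hf, shiftMean_const]

variable {Ω : Type*} [MeasurableSpace Ω] {P : Measure Ω} [IsProbabilityMeasure P] {V : Ω → ℝ}
  {m M σ L : ℝ} {N : ℕ} {F : ℝ → ℝ}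

lemma _root_.SolvesE.eq_mixMean (hE : SolvesE P V σ N F) (hs : SuppIoo P V m M)
    (hV : Measurable V) (hσ : 0 < σ) (hN : N ≠ 0) (hFr : ∀ x, F x ∈ Ioo m M) (x : ℝ) :
    F x = mixMean (1 / N) (shiftMean (gaussianLaw σ) (phig P V σ F)) x :=
  (hE x).trans <| integral_kernel
    (hs.isBddMeasurable_phig hV hσ (hE.measurable hσ (hs.integrable hV)) hFr) hσ hN x

lemma _root_.SolvesE.equilibrium (hE : SolvesE P V σ N F) (hs : SuppIoo P V m M)
    (hV : Measurable V) (hσ : 0 < σ) (hN : 2 ≤ N)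
    (h_diff : DifferentiableOn ℝ (Pip P V) (Ioo m M))
    (hL : Tendsto (deriv (Psip P V)) (nhdsWithin M (Iio M)) (nhds L))
    (hFr : ∀ x, F x ∈ Ioo m M) :
    Equilibrium (gaussianLaw σ) (1 / N) (M - m) L (fun d => Pip P V (M - d))
      (fun d => M - Psip P V (M - d)) (fun x => M - F x) (fun x => M - phig P V σ F x) := by
  have hF := hE.measurable hσ (hs.integrable hV)
  have h_phig := hs.isBddMeasurable_phig hV hσ hF hFr
  have h_mean := hs.integral_mem_Ioo hV
  have hN' : (2 : ℝ) ≤ N := by exact_mod_cast hN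
  exact {
    hs.endpointLaw hV h_diff hL with
    expMoments := hasExpMoments_gaussianLaw σ
    openPos := isOpenPosMeasure_gaussianLaw hσ
    p_nonneg := by positivity
    p_le_half := one_div_le_one_div_of_le two_pos hN'
    measurable_D := hF.const_sub M
    D_mem := fun x => ⟨sub_pos.2 (hFr x).2, sub_lt_sub_left (hFr x).1 M⟩
    measurable_kappa := h_phig.measurable.const_sub M
    kappa_mem := fun x =>
      have h := hs.phig_mem_Icc hV hσ hF hFr x
      ⟨sub_nonneg.2 h.2, sub_le_sub_left h.1 M⟩
    kappa_mul_shiftMean := fun x hx => by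
      simp only [sub_sub_cancel, phig, if_pos hx]
      exact hs.sub_phip_mul_shiftMean hV hσ hF (fun y => (hFr y).2) x
    exists_level := ⟨M - ∫ ω, V ω ∂P, ⟨sub_pos.2 h_mean.2, sub_lt_sub_left h_mean.1 M⟩,
      fun d hd => sub_le_sub_left (hs.integral_le_Psip hV (sub_lt_self M hd.1)) M,
      fun x hx => by
        rw [phig, if_neg hx.not_ge]
        exact sub_le_sub_left (hs.phim_mem_Icc hV hσ hF (fun y => (hFr y).1) x).2 M⟩
    continuous_shiftMean := by
      obtain ⟨C, hC⟩ := ((IsBddMeasurable.const M).sub h_phig).bdd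
      exact continuous_shiftMean_gaussianLaw hσ hC
    D_eq := fun x => by
      rw [shiftMean_const_sub h_phig, mixMean_const_sub h_phig.shiftMean,
        ← hE.eq_mixMean hs hV hσ (by lia) hFr] }

/-- The implementation shortfall `IS` of a solution `F` of equation (E). -/
noncomputable def shortfall (N : ℕ) (F : ℝ → ℝ) (x : ℝ) : ℝ :=
  N * ∫ y in (0 : ℝ)..1, F (x * y) * y ^ (N - 1)

lemma _root_.SolvesE.shortfall_eq (hE : SolvesE P V σ N F) (hs : SuppIoo P V m M)
    (hV : Measurable V) (hσ : 0 < σ) (hN : N ≠ 0) (hFr : ∀ x, F x ∈ Ioo m M) (x : ℝ) :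
    shortfall N F x = runMean (shiftMean (gaussianLaw σ) (phig P V σ F)) x := by
  obtain ⟨C, hC⟩ :=
    (hs.isBddMeasurable_phig hV hσ (hE.measurable hσ (hs.integrable hV)) hFr).bdd
  simp_rw [shortfall, hE.eq_mixMean hs hV hσ hN hFr]
  exact mul_integral_mixMean_mul_pow hN (continuous_shiftMean_gaussianLaw hσ hC) x

lemma one_sub_mul_inv_div_one_sub_inv {n : ℝ} (hn : 1 < n) (hL : L ≤ 1) :
    (1 - L * (1 / n)) / (1 - 1 / n) = n / (n + (L - 1) / (1 - L / n)) := by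
  have h_n : n - 1 ≠ 0 := (sub_pos.2 hn).ne'
  have h_L : n - L ≠ 0 := by linarith
  have h_prod : n * (n - L) + n * (L - 1) ≠ 0 := by
    rw [← mul_add, sub_add_sub_cancel]
    exact mul_ne_zero (by linarith) h_n
  field_simp
  rw [sub_add_sub_cancel]
  field_simp

theorem tendsto_shortfall_div_atTop (hs : SuppIoo P V m M) (hV : Measurable V) (hσ : 0 < σ)
    (hN : 2 ≤ N) (h_diff : DifferentiableOn ℝ (Pip P V) (Ioo m M))
    (hL : Tendsto (deriv (Psip P V)) (nhdsWithin M (Iio M)) (nhds L))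
    (hFr : ∀ x, F x ∈ Ioo m M) (hE : SolvesE P V σ N F) :
    Tendsto (fun x => (M - shortfall N F x) / (M - F x)) atTop
      (nhds (N / (N + (L - 1) / (1 - L / N)))) := by
  have h_eq := hE.equilibrium hs hV hσ hN h_diff hL hFr
  have h_phig := hs.isBddMeasurable_phig hV hσ (hE.measurable hσ (hs.integrable hV)) hFr
  have hN' : (1 : ℝ) < N := by exact_mod_cast hN
  rw [← one_sub_mul_inv_div_one_sub_inv hN' h_eq.L_le_one]
  refine h_eq.tendsto_runMean_div_D.congr fun x => ?_
  rw [shiftMean_const_sub h_phig, runMean_const_sub h_phig.shiftMean,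
    hE.shortfall_eq hs hV hσ (by lia) hFr]

end UpperEnd

section Reflection

variable {Ω : Type*} [MeasurableSpace Ω] {P : Measure Ω} {V : Ω → ℝ} {m M σ L y z : ℝ}
  {N : ℕ} {F : ℝ → ℝ}

lemma setOf_neg_gt_ae_eq (h : P {ω | V ω = -y} = 0) :
    {ω | (-V) ω > y} =ᵐ[P] {ω | V ω ≤ -y} := by
  filter_upwards [measure_eq_zero_iff_ae_notMem.1 h] with ω (hω : V ω ≠ -y)
  exact propext (lt_neg.trans hω.le_iff_lt.symm)

lemma setOf_neg_le_ae_eq (h : P {ω | V ω = -y} = 0) :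
    {ω | (-V) ω ≤ y} =ᵐ[P] {ω | V ω > -y} := by
  filter_upwards [measure_eq_zero_iff_ae_notMem.1 h] with ω (hω : V ω ≠ -y)
  exact propext (neg_le.trans hω.symm.le_iff_lt)

lemma Pip_neg (h : P {ω | V ω = -y} = 0) : Pip P (-V) y = Pim P V (-y) :=
  measureReal_congr (setOf_neg_gt_ae_eq h)

lemma Pim_neg (h : P {ω | V ω = -y} = 0) : Pim P (-V) y = Pip P V (-y) :=
  measureReal_congr (setOf_neg_le_ae_eq h)

lemma Phip_neg (h : P {ω | V ω = -y} = 0) : Phip P (-V) y = -Phim P V (-y) :=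
  (setIntegral_congr_set (setOf_neg_gt_ae_eq h)).trans (integral_neg V)

lemma Phim_neg (h : P {ω | V ω = -y} = 0) : Phim P (-V) y = -Phip P V (-y) :=
  (setIntegral_congr_set (setOf_neg_le_ae_eq h)).trans (integral_neg V)

lemma Psip_neg (h : P {ω | V ω = -y} = 0) : Psip P (-V) y = -Psim P V (-y) := by
  rw [Psip, Phip_neg h, Pip_neg h, neg_div, Psim]

lemma integral_comp_neg_mul_gq (σ : ℝ) (f : ℝ → ℝ) (x : ℝ) :
    ∫ z, f (-z) * gq σ (x - z) = ∫ z, f z * gq σ (-x - z) := by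
  rw [← integral_neg_eq_self]
  congr 1 with z
  rw [neg_neg, ← gq_neg, neg_sub, ← neg_add', add_comm, neg_add']

lemma phip_neg (h : ∀ x, P {ω | V ω = F x} = 0) (x : ℝ) :
    phip P (-V) σ (fun y => -F (-y)) x = -phim P V σ F (-x) := by
  have h_neg : ∀ z, P {ω | V ω = - -F (-z)} = 0 := fun z => by simpa only [neg_neg] using h (-z)
  simp_rw [phip, phim, Phip_neg (h_neg _), Pip_neg (h_neg _), neg_neg, neg_mul, integral_neg,
    neg_div]
  rw [integral_comp_neg_mul_gq σ fun z => Phim P V (F z),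
    integral_comp_neg_mul_gq σ fun z => Pim P V (F z)]

lemma phim_neg (h : ∀ x, P {ω | V ω = F x} = 0) (x : ℝ) :
    phim P (-V) σ (fun y => -F (-y)) x = -phip P V σ F (-x) := by
  have h_neg : ∀ z, P {ω | V ω = - -F (-z)} = 0 := fun z => by simpa only [neg_neg] using h (-z)
  simp_rw [phip, phim, Phim_neg (h_neg _), Pim_neg (h_neg _), neg_neg, neg_mul, integral_neg,
    neg_div]
  rw [integral_comp_neg_mul_gq σ fun z => Phip P V (F z),
    integral_comp_neg_mul_gq σ fun z => Pip P V (F z)]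

lemma phig_neg (h : ∀ x, P {ω | V ω = F x} = 0) {x : ℝ} (hx : x ≠ 0) :
    phig P (-V) σ (fun y => -F (-y)) x = -phig P V σ F (-x) := by
  rcases hx.lt_or_gt with hx | hx
  · rw [phig, if_neg hx.not_ge, phim_neg h, phig, if_pos (neg_pos.2 hx).le]
  · rw [phig, if_pos hx.le, phip_neg h, phig, if_neg (neg_lt_zero.2 hx).not_ge]

lemma gqbar_neg_neg (σ x z : ℝ) : gqbar σ (-x) (-z) = gqbar σ x z := by
  simp_rw [gqbar_eq_runMean, runMean, neg_mul, ← neg_sub', gq_neg]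

-- The point `0`, where `phig_neg` fails, is invisible to the integral.
lemma _root_.SolvesE.neg (hE : SolvesE P V σ N F) (h : ∀ x, P {ω | V ω = F x} = 0) :
    SolvesE P (-V) σ N fun x => -F (-x) := fun x => by
  simp only
  rw [hE (-x), ← integral_neg_eq_self, ← integral_neg]
  refine integral_congr_ae ?_
  filter_upwards [Measure.ae_ne volume 0] with z hz
  rw [phig_neg h hz, gqbar_neg_neg, ← neg_sub', gq_neg, mul_neg]

lemma shortfall_neg (N : ℕ) (F : ℝ → ℝ) (x : ℝ) :
    shortfall N (fun y => -F (-y)) x = -shortfall N F (-x) := by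
  simp [shortfall]

lemma _root_.SuppIoo.neg (hs : SuppIoo P V m M) : SuppIoo P (-V) (-M) (-m) := by
  obtain ⟨hmM, h_mem, h_gt, h_le⟩ := hs
  refine ⟨neg_lt_neg hmM, h_mem.mono fun ω hω => ⟨neg_le_neg hω.2, neg_le_neg hω.1⟩,
    fun y hy => ?_, fun y hy => ?_⟩
  · obtain ⟨z, hmz, hzy⟩ := exists_between (lt_neg.1 hy)
    exact (h_le z hmz).trans_le
      (measure_mono fun ω (hω : V ω ≤ z) => lt_neg.1 (hω.trans_lt hzy))
  · exact (h_gt (-y) (neg_lt.1 hy)).trans_le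
      (measure_mono fun ω (hω : -y < V ω) => (neg_lt.1 hω).le)

variable [IsProbabilityMeasure P]

lemma measureReal_setOf_eq_le (hV : Measurable V) (h : y < z) :
    P.real {ω | V ω = z} ≤ Pip P V y - Pip P V z := by
  rw [Pip_sub_Pip hV h.le]
  exact measureReal_mono fun ω (hω : V ω = z) => ⟨h.trans_eq hω.symm, hω.le.not_gt⟩

lemma measure_setOf_eq_zero (hV : Measurable V) (h_cont : ContinuousAt (Pip P V) y) :
    P {ω | V ω = y} = 0 := by
  have h_lim : Tendsto (fun x => Pip P V x - Pip P V y) (nhdsWithin y (Iio y)) (nhds 0) := by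
    simpa using (h_cont.tendsto.mono_left nhdsWithin_le_nhds).sub_const (Pip P V y)
  have h_le : P.real {ω | V ω = y} ≤ 0 :=
    ge_of_tendsto h_lim (eventually_mem_nhdsWithin.mono fun x hx => measureReal_setOf_eq_le hV hx)
  exact (measureReal_eq_zero_iff).1 (h_le.antisymm measureReal_nonneg)

lemma measure_setOf_eq_zero_of_differentiableOn (hV : Measurable V)
    (h_diff : DifferentiableOn ℝ (Pip P V) (Ioo m M)) (hy : y ∈ Ioo m M) :
    P {ω | V ω = y} = 0 :=
  measure_setOf_eq_zero hV (h_diff.differentiableAt (Ioo_mem_nhds hy.1 hy.2)).continuousAt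

lemma neg_mem_Ioo (hy : y ∈ Ioo (-M) (-m)) : -y ∈ Ioo m M := ⟨lt_neg.1 hy.2, neg_lt.1 hy.1⟩

lemma differentiableOn_Pip_neg (hV : Measurable V)
    (h_diff : DifferentiableOn ℝ (Pip P V) (Ioo m M)) :
    DifferentiableOn ℝ (Pip P (-V)) (Ioo (-M) (-m)) := by
  have h_comp : DifferentiableOn ℝ (fun y => 1 - Pip P V (-y)) (Ioo (-M) (-m)) :=
    (h_diff.comp differentiable_neg.differentiableOn fun _ => neg_mem_Ioo).const_sub 1
  refine h_comp.congr fun y hy => ?_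
  rw [Pip_neg (measure_setOf_eq_zero_of_differentiableOn hV h_diff (neg_mem_Ioo hy))]
  exact eq_sub_of_add_eq' (Pip_add_Pim hV (-y))

lemma tendsto_deriv_Psip_neg (hmM : m < M) (hV : Measurable V)
    (h_diff : DifferentiableOn ℝ (Pip P V) (Ioo m M))
    (hL : Tendsto (deriv (Psim P V)) (nhdsWithin m (Ioi m)) (nhds L)) :
    Tendsto (deriv (Psip P (-V))) (nhdsWithin (-m) (Iio (-m))) (nhds L) := by
  have h_eqOn : EqOn (Psip P (-V)) (fun y => -Psim P V (-y)) (Ioo (-M) (-m)) := fun y hy =>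
    Psip_neg (measure_setOf_eq_zero_of_differentiableOn hV h_diff (neg_mem_Ioo hy))
  have h_neg : Tendsto Neg.neg (nhdsWithin (-m) (Iio (-m))) (nhdsWithin m (Ioi m)) := by
    simpa using tendsto_neg_nhdsLT (a := -m)
  refine (hL.comp h_neg).congr' ?_
  filter_upwards [Ioo_mem_nhdsLT (neg_lt_neg hmM)] with y hy
  rw [(h_eqOn.eventuallyEq_of_mem (Ioo_mem_nhds hy.1 hy.2)).deriv_eq, deriv.fun_neg,
    deriv_comp_neg, neg_neg, Function.comp_apply]

theorem tendsto_shortfall_div_atBot (hs : SuppIoo P V m M) (hV : Measurable V) (hσ : 0 < σ)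
    (hN : 2 ≤ N) (h_diff : DifferentiableOn ℝ (Pip P V) (Ioo m M))
    (hL : Tendsto (deriv (Psim P V)) (nhdsWithin m (Ioi m)) (nhds L))
    (hFr : ∀ x, F x ∈ Ioo m M) (hE : SolvesE P V σ N F) :
    Tendsto (fun x => (shortfall N F x - m) / (F x - m)) atBot
      (nhds (N / (N + (L - 1) / (1 - L / N)))) := by
  have h_atom x : P {ω | V ω = F x} = 0 :=
    measure_setOf_eq_zero_of_differentiableOn hV h_diff (hFr x)
  have h_upper := tendsto_shortfall_div_atTop hs.neg hV.neg hσ hN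
    (differentiableOn_Pip_neg hV h_diff) (tendsto_deriv_Psip_neg hs.1 hV h_diff hL)
    (fun x => ⟨neg_lt_neg (hFr (-x)).2, neg_lt_neg (hFr (-x)).1⟩) (hE.neg h_atom)
  refine (h_upper.comp tendsto_neg_atBot_atTop).congr fun x => ?_
  rw [Function.comp_apply, shortfall_neg, neg_neg]
  congr 1 <;> ring

end Reflection

end ImplementationShortfall

theorem stmt19_general {Ω : Type*} [MeasurableSpace Ω] (P : Measure Ω) [IsProbabilityMeasure P]
    (V : Ω → ℝ) (hVmeas : Measurable V) (m M : ℝ) (hsupp : SuppIoo P V m M)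
    (σ : ℝ) (hσ : 0 < σ) (N : ℕ) (hN : 2 ≤ N)
    (hdiff : DifferentiableOn ℝ (Pip P V) (Ioo m M))
    (Lp : ℝ) (hLp : Tendsto (deriv (Psip P V)) (nhdsWithin M (Iio M)) (nhds Lp))
    (Lm : ℝ) (hLm : Tendsto (deriv (Psim P V)) (nhdsWithin m (Ioi m)) (nhds Lm))
    (F : ℝ → ℝ) (hFr : ∀ x, F x ∈ Ioo m M) (hFsol : SolvesE P V σ N F)
    (IS : ℝ → ℝ)
    (hIS : ∀ x : ℝ, IS x = N * ∫ y in (0 : ℝ)..1, F (x * y) * y ^ (N - 1)) :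
    Tendsto (fun x : ℝ => (M - IS x) / (M - F x)) atTop
      (nhds ((N : ℝ) / ((N : ℝ) + (Lp - 1) / (1 - Lp / (N : ℝ))))) ∧
    Tendsto (fun x : ℝ => (IS x - m) / (F x - m)) atBot
      (nhds ((N : ℝ) / ((N : ℝ) + (Lm - 1) / (1 - Lm / (N : ℝ))))) := by
  obtain rfl : IS = ImplementationShortfall.shortfall N F := funext hIS
  exact ⟨ImplementationShortfall.tendsto_shortfall_div_atTop hsupp hVmeas hσ hN hdiff hLp hFr hFsol,
    ImplementationShortfall.tendsto_shortfall_div_atBot hsupp hVmeas hσ hN hdiff hLm hFr hFsol⟩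

/-- Let `N ≥ 2`, `Π⁺` be `C¹` on `(m,M)`, with `Ψ⁺ₓ(M)` and `Ψ⁻ₓ(m)` existing as
the one-sided limits of the derivatives of `Ψ⁺` at `M⁻` and of `Ψ⁻` at `m⁺`. Let `F` solve (E)
with values in `(m,M)` and define `IS(x) = N·∫₀¹ F(x·y)·y^{N−1} dy`. Then
`(M − IS(x))/(M − F(x)) → N/(N + ρ⁺)` as `x → ∞` and
`(IS(x) − m)/(F(x) − m) → N/(N + ρ⁻)` as `x → −∞`. -/
theorem stmt19 {Ω : Type*} [MeasurableSpace Ω] (P : Measure Ω) [IsProbabilityMeasure P]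
    (V : Ω → ℝ) (hVmeas : Measurable V) (hV : Integrable V P)
    (m M : ℝ) (hsupp : SuppIoo P V m M)
    (σ : ℝ) (hσ : 0 < σ) (N : ℕ) (hN : 2 ≤ N)
    (hC1 : ContDiffOn ℝ 1 (Pip P V) (Set.Ioo m M))
    (Lp : ℝ) (hLp : Tendsto (deriv (Psip P V)) (nhdsWithin M (Set.Iio M)) (nhds Lp))
    (Lm : ℝ) (hLm : Tendsto (deriv (Psim P V)) (nhdsWithin m (Set.Ioi m)) (nhds Lm))
    (F : ℝ → ℝ) (hFr : ∀ x, F x ∈ Set.Ioo m M) (hFsol : SolvesE P V σ N F)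
    (IS : ℝ → ℝ)
    (hIS : ∀ x : ℝ, IS x = N * ∫ y in (0:ℝ)..1, F (x * y) * y ^ (N - 1)) :
    Tendsto (fun x : ℝ => (M - IS x) / (M - F x)) atTop
      (nhds ((N:ℝ) / ((N:ℝ) + (Lp - 1) / (1 - Lp / (N:ℝ))))) ∧
    Tendsto (fun x : ℝ => (IS x - m) / (F x - m)) atBot
      (nhds ((N:ℝ) / ((N:ℝ) + (Lm - 1) / (1 - Lm / (N:ℝ))))) := by
  exact stmt19_general P V hVmeas m M hsupp σ hσ N hN
    (hC1.differentiableOn one_ne_zero) Lp hLp Lm hLm F hFr hFsol IS hIS
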